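/- The set WO of reals coding well-orders is infinite time decidable. -/

import Mathlib

open scoped Classical

namespace ITTM

/-- A real is an element of Cantor space. -/
abbrev R := ℕ → Bool

/-- The constant-zero real. -/
def zeroR : R := fun _ => false

/-- The real ⟨1,0,0,...⟩ coding the answer "Yes". -/
def oneR : R := fun n => decide (n = 0)

/-- The real coding a natural number `p`: `p` ones followed by zeros. -/
def natR (p : ℕ) : R := fun n => decide (n < p)

/-- The real coding the pair of reals `(y, z)`. -/
def pairR (y z : R) : R := fun n => if n % 2 = 0 then y (n / 2) else z (n / 2)

/-- A snapshot of an infinite time Turing machine computation with state set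
`Fin (Q+1)`: the current state, the head position, and the contents of the
three tapes (tape 0 is the input tape, tape 1 the scratch tape, tape 2 the
output tape); cells hold values in `Bool` (`true` = 1, `false` = 0). -/
structure Snapshot (Q : ℕ) where
  state : Fin (Q + 1)
  head : ℕ
  tape : Fin 3 → ℕ → Bool

/-- An infinite time Turing machine program: a finite set of states
`Fin (Q+1)` with distinguished start, limit and halt states, and a finite
transition table which, given the current state and the three cell values
read by the head, specifies the next state, the three values to write, and
the direction to move (`true` = right, `false` = left). -/
structure Machine where
  Q : ℕ
  start : Fin (Q + 1)
  limit : Fin (Q + 1)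
  halt : Fin (Q + 1)
  trans : Fin (Q + 1) × (Fin 3 → Bool) → Fin (Q + 1) × (Fin 3 → Bool) × Bool

instance : Inhabited Machine := ⟨⟨0, 0, 0, 0, fun _ => (0, fun _ => false, true)⟩⟩

namespace Machine

/-- The initial snapshot on input `x`: head on cell 0 in the start state, `x`
on the input tape, the other tapes filled with zeros. -/
def init (M : Machine) (x : R) : Snapshot M.Q where
  state := M.start
  head := 0
  tape := fun i n => if i = 0 then x n else false

/-- One step of computation applied to a snapshot. -/
def stepSnap (M : Machine) (s : Snapshot M.Q) : Snapshot M.Q :=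
  let t := M.trans (s.state, fun i => s.tape i s.head)
  { state := t.1
    head := if t.2.2 then s.head + 1 else s.head - 1
    tape := fun i n => if n = s.head then t.2.1 i else s.tape i n }

/-- The snapshot of the computation of machine `M` on input `x` at ordinal
stage `α`, defined by transfinite recursion: at stage 0 the initial snapshot,
at successor stages the transition table is applied, and at limit stages the
head is on cell 0 in the limit state and each cell holds the `limsup` of its
earlier values (1 iff its value was 1 cofinally often below the limit). -/
noncomputable def snap (M : Machine) (x : R) : Ordinal.{0} → Snapshot M.Q :=
  WellFounded.fix Ordinal.lt_wf fun α ih =>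
    if _h0 : α = 0 then M.init x
    else if hs : ∃ β, β < α ∧ α = β + 1 then
      M.stepSnap (ih hs.choose hs.choose_spec.1)
    else
      { state := M.limit
        head := 0
        tape := fun i n =>
          decide (∀ β < α, ∃ γ, β ≤ γ ∧ ∃ hγ : γ < α, (ih γ hγ).tape i n = true) }

/-- The machine is in the halt state at stage `α`. -/
def haltedAt (M : Machine) (x : R) (α : Ordinal) : Prop :=
  (M.snap x α).state = M.halt

/-- The computation of `M` on input `x` halts exactly at stage `α`: stage `α`
is the first stage at which the machine is in the halt state. -/
def haltsAt (M : Machine) (x : R) (α : Ordinal) : Prop :=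
  M.haltedAt x α ∧ ∀ β < α, ¬ M.haltedAt x β

/-- The computation of `M` on input `x` halts. -/
def halts (M : Machine) (x : R) : Prop := ∃ α, M.haltedAt x α

/-- The computation of `M` on input `x` halts with output `y`: at the first
stage at which the machine is in the halt state, the output tape reads `y`. -/
def outputs (M : Machine) (x y : R) : Prop :=
  ∃ α, M.haltsAt x α ∧ (M.snap x α).tape 2 = y

end Machine

/-- Machines are coded by natural numbers. -/
noncomputable instance : Encodable Machine :=
  Encodable.ofEquiv
    (Σ Q : ℕ, (Fin (Q + 1) × Fin (Q + 1) × Fin (Q + 1)) ×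
      ((Fin (Q + 1) × (Fin 3 → Bool)) → Fin (Q + 1) × (Fin 3 → Bool) × Bool))
    { toFun := fun M => ⟨M.Q, (M.start, M.limit, M.halt), M.trans⟩
      invFun := fun s => ⟨s.1, s.2.1.1, s.2.1.2.1, s.2.1.2.2, s.2.2⟩
      left_inv := fun _ => rfl
      right_inv := fun _ => rfl }

/-- The machine coded by the natural number `p`; every natural number codes a
machine, and every machine is coded by some natural number. -/
noncomputable def prog (p : ℕ) : Machine :=
  ((Encodable.decode p : Option Machine)).getD default

/-- `φ_p(x)` halts with output `y`. -/
noncomputable def phiOutputs (p : ℕ) (x y : R) : Prop := (prog p).outputs x y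

/-- A set of reals is infinite time decidable when some machine, on any input
`x`, halts with output ⟨1,0,0,...⟩ if `x ∈ A` and output ⟨0,0,0,...⟩ if
`x ∉ A`. -/
def ITTMDecidable (A : Set R) : Prop :=
  ∃ M : Machine, ∀ x : R, (x ∈ A → M.outputs x oneR) ∧ (x ∉ A → M.outputs x zeroR)

/-- A set of reals is infinite time semi-decidable when it is the halting set
of some machine. -/
def ITTMSemiDecidable (A : Set R) : Prop :=
  ∃ M : Machine, A = {x : R | M.halts x}

/-- The binary relation on ℕ coded by the real `x`:
`n ◁ k ⟺ x(⟨n,k⟩) = 1` where `⟨·,·⟩` is the pairing function. -/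
def rel (x : R) (n k : ℕ) : Prop := x (Nat.pair n k) = true

/-- The field of the relation coded by `x`. -/
def field (x : R) : Set ℕ := {n | ∃ k, rel x n k ∨ rel x k n}

/-- The relation coded by `x`, restricted to its field. -/
def relOn (x : R) : field x → field x → Prop := fun a b => rel x a.1 b.1

/-- The real `x` codes a well-order of (a subset of) ℕ, namely its field. -/
def codesWellOrder (x : R) : Prop := IsWellOrder (field x) (relOn x)

/-- The set of reals coding well-orders. -/
def WO : Set R := {x | codesWellOrder x}

/-- The real `x` codes a well-order of order type `α`. -/
def codesOrdinal (x : R) (α : Ordinal) : Prop :=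
  ∃ h : codesWellOrder x, @Ordinal.type _ (relOn x) h = α

/-- An ordinal is clockable when some machine on input 0 halts exactly at
stage `α`. -/
def Clockable (α : Ordinal) : Prop := ∃ M : Machine, M.haltsAt zeroR α

/-- A real is writable when it is the output of some machine on input 0. -/
def WritableReal (x : R) : Prop := ∃ M : Machine, M.outputs zeroR x

/-- An ordinal is writable when some writable real codes a well-order of that
order type. -/
def WritableOrdinal (α : Ordinal) : Prop :=
  ∃ x : R, WritableReal x ∧ codesOrdinal x α

/-- A real is eventually writable when some machine on input 0 never halts,
but from some stage onward the content of its output tape is exactly `x`. -/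
def EventuallyWritableReal (x : R) : Prop :=
  ∃ M : Machine, ¬ M.halts zeroR ∧ ∃ α : Ordinal, ∀ β ≥ α, (M.snap zeroR β).tape 2 = x

/-- An ordinal is eventually writable when some eventually writable real codes
a well-order of that order type. -/
def EventuallyWritableOrdinal (α : Ordinal) : Prop :=
  ∃ x : R, EventuallyWritableReal x ∧ codesOrdinal x α

end ITTM

/-!
Starting from the field of the relation coded by `x`, let every round remove the elements that no
remaining element prevents from being the least one. At limits the intersection is taken. The
relation is a well-order if and only if this process ends with the empty set: the least elements of
a well-order are removed one by one, whereas a set without a least element, and likewise a pair of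
incomparable elements, is never touched.

A machine carries out a round in `ω` steps. It lists the pairs of natural numbers, and for every
remaining number it looks for a pair showing that the number is to be kept. Removed numbers are
never restored, so the limit superior of the tape at a limit of rounds is the intersection of the
preceding sets. A fixed point is reached when a round removes nothing, which is read off from two
consecutive sets kept on the tape. Since these coincide at every limit of rounds, a flag that each
round sets and resets, and which is therefore on at exactly those limits, keeps the machine from
stopping there.
-/

namespace ITTM

open Filter Function Ordinal

/-! ### Limit stages -/

/-- The limit superior of the values that a cell with history `f` takes before stage `α`. -/
noncomputable def limSupBelow (α : Ordinal.{0}) (f : Ordinal.{0} → Bool) : Bool :=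
  decide (∀ β < α, ∃ γ, β ≤ γ ∧ γ < α ∧ f γ = true)

section limSupBelow

variable {α δ : Ordinal.{0}} {f : Ordinal.{0} → Bool}

theorem limSupBelow_eq_true_iff :
    limSupBelow α f = true ↔ ∀ β < α, ∃ γ, β ≤ γ ∧ γ < α ∧ f γ = true :=
  decide_eq_true_iff

theorem limSupBelow_eq_false_iff :
    limSupBelow α f = false ↔ ∃ β < α, ∀ γ, β ≤ γ → γ < α → f γ = false := by
  simp only [← Bool.not_eq_true, limSupBelow_eq_true_iff, not_forall, not_exists, not_and,
    exists_prop]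

theorem limSupBelow_eq_of_eventually_const {b : Bool} (hδ : δ < α)
    (h : ∀ γ, δ ≤ γ → γ < α → f γ = b) : limSupBelow α f = b := by
  cases b with
  | false => exact limSupBelow_eq_false_iff.2 ⟨δ, hδ, h⟩
  | true =>
    exact limSupBelow_eq_true_iff.2 fun β hβ =>
      ⟨max β δ, le_max_left .., max_lt hβ hδ, h _ (le_max_right ..) (max_lt hβ hδ)⟩

end limSupBelow

namespace Machine

variable (M : Machine) (x : R)

theorem snap_zero : M.snap x 0 = M.init x := by
  rw [snap, WellFounded.fix_eq]
  exact dif_pos rfl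

theorem snap_add_one (α : Ordinal.{0}) : M.snap x (α + 1) = M.stepSnap (M.snap x α) := by
  have hs : ∃ β, β < α + 1 ∧ α + 1 = β + 1 := ⟨α, lt_add_one α, rfl⟩
  have hα : hs.choose = α := (Order.succ_injective hs.choose_spec.2).symm
  conv_lhs => rw [snap, WellFounded.fix_eq, dif_neg (by simp), dif_pos hs]
  exact congrArg (fun β => M.stepSnap (M.snap x β)) hα

theorem snap_of_isSuccLimit {α : Ordinal.{0}} (h : Order.IsSuccLimit α) :
    M.snap x α =
      { state := M.limit
        head := 0
        tape := fun i n => limSupBelow α fun γ => (M.snap x γ).tape i n } := by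
  have hs : ¬ ∃ β, β < α ∧ α = β + 1 := by
    rintro ⟨β, -, rfl⟩
    exact h.isSuccPrelimit β (Order.covBy_add_one β)
  have h0 : α ≠ 0 := h.ne_bot
  conv_lhs => rw [snap, WellFounded.fix_eq, dif_neg h0, dif_neg hs]
  simp only [limSupBelow, snap, exists_prop]
  congr!

end Machine

/-! ### Programs with an arbitrary finite state set -/

/-- A program whose states form an arbitrary type and which never changes the input tape. From the
current state and the bits read on the input, scratch and output tapes, the table `next` gives the
next state, the bits to write on the scratch and output tapes, and the direction to move (`true` is
right). -/
structure Program (σ : Type) where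
  start : σ
  limit : σ
  halt : σ
  next : σ → Bool → Bool → Bool → σ × Bool × Bool × Bool

/-- A snapshot of the computation of a `Program`; the constant input tape is left out. -/
structure Config (σ : Type) where
  state : σ
  head : ℕ
  scratch : ℕ → Bool
  output : ℕ → Bool

namespace Program

variable {σ : Type} (P : Program σ) (x : R)

/-- One step of computation on input `x`. -/
def step (c : Config σ) : Config σ :=
  let t := P.next c.state (x c.head) (c.scratch c.head) (c.output c.head)
  { state := t.1
    head := if t.2.2.2 then c.head + 1 else c.head - 1
    scratch := update c.scratch c.head t.2.1
    output := update c.output c.head t.2.2.1 }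

section Transfinite

variable [Finite σ] [Nonempty σ]

/-- A numbering of the states by the state set of a `Machine`. -/
noncomputable def stateEquiv (σ : Type) [Finite σ] [Nonempty σ] :
    σ ≃ Fin (Nat.card σ - 1 + 1) :=
  (Finite.equivFin σ).trans (finCongr (Nat.sub_add_cancel Nat.card_pos).symm)

/-- The infinite time Turing machine carrying out a program. -/
noncomputable def toMachine : Machine where
  Q := Nat.card σ - 1
  start := stateEquiv σ P.start
  limit := stateEquiv σ P.limit
  halt := stateEquiv σ P.halt
  trans := fun q =>
    let t := P.next ((stateEquiv σ).symm q.1) (q.2 0) (q.2 1) (q.2 2)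
    (stateEquiv σ t.1, ![q.2 0, t.2.1, t.2.2.1], t.2.2.2)

variable {P} in
/-- The configuration described by a snapshot of the machine. -/
noncomputable def ofSnapshot (s : Snapshot P.toMachine.Q) : Config σ where
  state := (stateEquiv σ).symm s.state
  head := s.head
  scratch := s.tape 1
  output := s.tape 2

theorem toMachine_stepSnap_tape_zero (s : Snapshot P.toMachine.Q) :
    (P.toMachine.stepSnap s).tape 0 = s.tape 0 := by
  funext n
  by_cases hn : n = s.head
  · subst hn
    exact if_pos rfl
  · exact if_neg hn

theorem ofSnapshot_stepSnap (s : Snapshot P.toMachine.Q) :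
    ofSnapshot (P.toMachine.stepSnap s) = P.step (s.tape 0) (ofSnapshot s) := by
  rw [ofSnapshot, step, Config.mk.injEq]
  exact ⟨(stateEquiv σ).symm_apply_apply _, rfl, funext fun _ => (update_apply ..).symm,
    funext fun _ => (update_apply ..).symm⟩

/-- The configuration at stage `α` of the computation on input `x`. -/
noncomputable def config (α : Ordinal.{0}) : Config σ := ofSnapshot (P.toMachine.snap x α)

theorem toMachine_snap_tape_zero (α : Ordinal.{0}) : (P.toMachine.snap x α).tape 0 = x := by
  induction α using Ordinal.limitRecOn with
  | zero => rw [Machine.snap_zero]; rfl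
  | add_one α ih => rw [Machine.snap_add_one, toMachine_stepSnap_tape_zero, ih]
  | limit α h ih =>
    rw [Machine.snap_of_isSuccLimit _ _ h]
    exact funext fun n => limSupBelow_eq_of_eventually_const h.bot_lt
      fun γ _ hγ => congrFun (ih γ hγ) n

theorem config_zero : P.config x 0 = ⟨P.start, 0, zeroR, zeroR⟩ := by
  rw [config, Machine.snap_zero, ofSnapshot, Config.mk.injEq]
  exact ⟨(stateEquiv σ).symm_apply_apply _, rfl, rfl, rfl⟩

theorem config_add_one (α : Ordinal.{0}) : P.config x (α + 1) = P.step x (P.config x α) := by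
  rw [config, Machine.snap_add_one, ofSnapshot_stepSnap, toMachine_snap_tape_zero, config]

theorem config_of_isSuccLimit {α : Ordinal.{0}} (h : Order.IsSuccLimit α) :
    P.config x α =
      { state := P.limit
        head := 0
        scratch := fun n => limSupBelow α fun γ => (P.config x γ).scratch n
        output := fun n => limSupBelow α fun γ => (P.config x γ).output n } := by
  rw [config, Machine.snap_of_isSuccLimit _ _ h, ofSnapshot, Config.mk.injEq]
  exact ⟨(stateEquiv σ).symm_apply_apply _, rfl, rfl, rfl⟩

theorem config_add_nat (α : Ordinal.{0}) (i : ℕ) :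
    P.config x (α + i) = (P.step x)^[i] (P.config x α) := by
  induction i with
  | zero => rw [Nat.cast_zero, add_zero, iterate_zero_apply]
  | succ i ih => rw [Nat.cast_succ, ← add_assoc, config_add_one, ih, iterate_succ_apply']

theorem toMachine_outputs {α : Ordinal.{0}} (h : (P.config x α).state = P.halt)
    (h' : ∀ β < α, (P.config x β).state ≠ P.halt) :
    P.toMachine.outputs x (P.config x α).output :=
  ⟨α, ⟨(stateEquiv σ).symm_apply_eq.1 h,
    fun β hβ hb => h' β hβ ((stateEquiv σ).symm_apply_eq.2 hb)⟩, rfl⟩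

section AddOmega

variable {P x} {α : Ordinal.{0}}

theorem exists_add_nat_of_lt_add_omega0 {γ : Ordinal.{0}} (h : α ≤ γ) (h' : γ < α + ω) :
    ∃ i : ℕ, γ = α + i := by
  obtain ⟨i, hi⟩ := lt_omega0.1 (sub_lt_of_lt_add h' omega0_pos)
  exact ⟨i, by rw [← hi, Ordinal.add_sub_cancel_of_le h]⟩

theorem limSupBelow_add_omega0 {f : Ordinal.{0} → Bool} {b : Bool}
    (h : ∀ᶠ i : ℕ in atTop, f (α + i) = b) : limSupBelow (α + ω) f = b := by
  obtain ⟨j, hj⟩ := eventually_atTop.1 h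
  refine limSupBelow_eq_of_eventually_const (add_lt_add_right (natCast_lt_omega0 j) α)
    fun γ hγ hγ' => ?_
  obtain ⟨i, rfl⟩ := exists_add_nat_of_lt_add_omega0 (le_self_add.trans hγ) hγ'
  exact hj i (Nat.cast_le.1 (le_of_add_le_add_left hγ))

theorem scratch_add_omega0 {n : ℕ} {b : Bool}
    (h : ∀ᶠ i in atTop, ((P.step x)^[i] (P.config x α)).scratch n = b) :
    (P.config x (α + ω)).scratch n = b := by
  rw [config_of_isSuccLimit _ _ (isSuccLimit_add α isSuccLimit_omega0)]
  exact limSupBelow_add_omega0 (h.mono fun i hi => by rwa [config_add_nat])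

theorem output_add_omega0 {n : ℕ} {b : Bool}
    (h : ∀ᶠ i in atTop, ((P.step x)^[i] (P.config x α)).output n = b) :
    (P.config x (α + ω)).output n = b := by
  rw [config_of_isSuccLimit _ _ (isSuccLimit_add α isSuccLimit_omega0)]
  exact limSupBelow_add_omega0 (h.mono fun i hi => by rwa [config_add_nat])

end AddOmega

end Transfinite

/-- From `c` the program reaches a configuration satisfying `E`, and all configurations before that
satisfy `G`. -/
def Run (G E : Config σ → Prop) (c : Config σ) : Prop :=
  ∃ k, E ((P.step x)^[k] c) ∧ ∀ i < k, G ((P.step x)^[i] c)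

section Run

variable {P x} {G E Q : Config σ → Prop} {c : Config σ}

theorem Run.done (h : E c) : P.Run x G E c := ⟨0, h, fun _ hi => absurd hi (Nat.not_lt_zero _)⟩

theorem Run.head (hc : G c) (h : P.Run x G E (P.step x c)) : P.Run x G E c := by
  obtain ⟨k, hk, hi⟩ := h
  refine ⟨k + 1, hk, fun i hik => ?_⟩
  cases i with
  | zero => exact hc
  | succ i => exact hi i (Nat.succ_lt_succ_iff.1 hik)

theorem Run.mono {E' : Config σ → Prop} (h : P.Run x G E c) (hE : ∀ c, E c → E' c) :
    P.Run x G E' c := by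
  obtain ⟨k, hk, hG⟩ := h
  exact ⟨k, hE _ hk, hG⟩

theorem Run.trans {E' : Config σ → Prop} (h : P.Run x G E c) (hE : ∀ c, E c → P.Run x G E' c) :
    P.Run x G E' c := by
  obtain ⟨k, hk, hG⟩ := h
  obtain ⟨k', hk', hG'⟩ := hE _ hk
  refine ⟨k' + k, by rwa [iterate_add_apply], fun i hi => ?_⟩
  by_cases hik : i < k
  · exact hG i hik
  · obtain ⟨j, rfl⟩ := Nat.exists_eq_add_of_le' (not_lt.1 hik)
    rw [iterate_add_apply]
    exact hG' j (by omega)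

theorem Run.forall_iterate (h : P.Run x G E c) (hG : ∀ c, G c → Q c)
    (hE : ∀ c, E c → ∀ i, Q ((P.step x)^[i] c)) (i : ℕ) : Q ((P.step x)^[i] c) := by
  obtain ⟨k, hk, hk'⟩ := h
  by_cases hik : i < k
  · exact hG _ (hk' i hik)
  · obtain ⟨j, rfl⟩ := Nat.exists_eq_add_of_le' (not_lt.1 hik)
    rw [iterate_add_apply]
    exact hE _ hk j

theorem Run.eventually_iterate (h : P.Run x G E c)
    (hE : ∀ c, E c → ∀ᶠ i in atTop, Q ((P.step x)^[i] c)) :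
    ∀ᶠ i in atTop, Q ((P.step x)^[i] c) := by
  obtain ⟨k, hk, -⟩ := h
  rw [← map_add_atTop_eq_nat k, eventually_map]
  simpa only [iterate_add_apply] using hE _ hk

variable {G A : ℕ → Config σ → Prop} (hrun : ∀ p c, A p c → P.Run x (G p) (A (p + 1)) c)
  (hA : ∀ p c, A p c → ¬ A (p + 1) c)

include hrun hA in
theorem exists_phase {p : ℕ} (h : A p c) (i : ℕ) : ∃ q ≥ p, G q ((P.step x)^[i] c) := by
  induction i using Nat.strong_induction_on generalizing p c with
  | _ i ih =>
    obtain ⟨k, hk, hG⟩ := hrun p c h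
    by_cases hik : i < k
    · exact ⟨p, le_rfl, hG i hik⟩
    have hk0 : 0 < k := Nat.pos_of_ne_zero fun hk0 => hA p c h (by simpa [hk0] using hk)
    obtain ⟨q, hq, hGq⟩ := ih (i - k) (by omega) hk
    rw [← iterate_add_apply, Nat.sub_add_cancel (by omega)] at hGq
    exact ⟨q, by omega, hGq⟩

include hrun in
theorem exists_iterate_of_phase {p q : ℕ} (h : A p c) (hq : p ≤ q) :
    ∃ k, A q ((P.step x)^[k] c) := by
  induction q, hq using Nat.le_induction with
  | base => exact ⟨0, h⟩
  | succ q _ ih =>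
    obtain ⟨k, hk⟩ := ih
    obtain ⟨k', hk', -⟩ := hrun q _ hk
    exact ⟨k' + k, by rwa [iterate_add_apply]⟩

include hrun hA in
theorem eventually_phase {p : ℕ} (h : A p c) (q : ℕ) :
    ∀ᶠ i in atTop, ∃ q' ≥ q, G q' ((P.step x)^[i] c) := by
  obtain ⟨k, hk⟩ := exists_iterate_of_phase hrun h (Nat.le_add_right p q)
  filter_upwards [eventually_ge_atTop k] with i hi
  obtain ⟨q', hq', hG⟩ := exists_phase hrun hA hk (i - k)
  rw [← iterate_add_apply, Nat.sub_add_cancel hi] at hG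
  exact ⟨q', by omega, hG⟩

theorem outputs_of_run [Finite σ] [Nonempty σ] {α : Ordinal.{0}} {y : R}
    (h : P.Run x (fun c => c.state ≠ P.halt) (fun c => c.state = P.halt ∧ c.output = y)
      (P.config x α))
    (h' : ∀ β < α, (P.config x β).state ≠ P.halt) : P.toMachine.outputs x y := by
  obtain ⟨k, ⟨hk, rfl⟩, hG⟩ := h
  rw [← config_add_nat] at hk ⊢
  refine toMachine_outputs _ _ hk fun γ hγ => ?_
  obtain hγα | hγα := lt_or_ge γ α
  · exact h' γ hγα
  · obtain ⟨i, rfl⟩ := exists_add_nat_of_lt_add_omega0 hγα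
      (hγ.trans (add_lt_add_right (natCast_lt_omega0 k) α))
    rw [config_add_nat]
    exact hG i (Nat.cast_lt.1 (lt_of_add_lt_add_left hγ))

end Run

end Program

/-! ### Well-orders and greatest fixed points -/

/-- The elements of `D` which a member of `S` prevents from being the least element of `S`, where
`r` is regarded as a strict order on `D`. -/
def notLeast {ι : Type*} (r : ι → ι → Prop) (D : Set ι) : Set ι →o Set ι where
  toFun S := {n ∈ D | ∃ k ∈ S, r k n ∨ k ≠ n ∧ ¬ r n k}
  monotone' := fun _ _ h _ ⟨hn, k, hk, hkn⟩ => ⟨hn, k, h hk, hkn⟩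

section NotLeast

variable {ι : Type*} {r : ι → ι → Prop} {D S : Set ι}

theorem mem_notLeast {n : ι} :
    n ∈ notLeast r D S ↔ n ∈ D ∧ ∃ k ∈ S, r k n ∨ k ≠ n ∧ ¬ r n k := Iff.rfl

theorem notLeast_subset : notLeast r D S ⊆ D := Set.sep_subset _ _

theorem gfp_notLeast_subset : (notLeast r D).gfp ⊆ D :=
  (notLeast r D).map_gfp.symm.subset.trans notLeast_subset

theorem gfp_notLeast_eq_empty (h : IsWellOrder D fun a b => r a b) :
    (notLeast r D).gfp = ∅ := by
  rw [← Set.not_nonempty_iff_eq_empty]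
  rintro ⟨n, hn⟩
  obtain ⟨m, hm, hmin⟩ := h.wf.has_min {d : D | (d : ι) ∈ (notLeast r D).gfp}
    ⟨⟨n, gfp_notLeast_subset hn⟩, hn⟩
  obtain ⟨-, k, hk, hkm⟩ := (notLeast r D).map_gfp.symm.subset hm
  let k' : D := ⟨k, gfp_notLeast_subset hk⟩
  obtain hkm | ⟨hne, hmk⟩ := hkm
  · exact hmin k' hk hkm
  · exact hne (congrArg Subtype.val (h.trichotomous k' m (hmin k' hk) hmk))

theorem isWellOrder_of_gfp_notLeast_eq_empty (h : (notLeast r D).gfp = ∅) :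
    IsWellOrder D fun a b => r a b where
  wf := by
    refine WellFounded.wellFounded_iff_has_min.2 fun S ⟨d, hd⟩ => ?_
    by_contra! hS
    have hpost : Subtype.val '' S ⊆ notLeast r D (Subtype.val '' S) := by
      rintro _ ⟨n, hn, rfl⟩
      obtain ⟨k, hk, hkn⟩ := hS n hn
      exact ⟨n.2, k, Set.mem_image_of_mem _ hk, .inl hkn⟩
    exact (h.subset ((notLeast r D).le_gfp hpost (Set.mem_image_of_mem _ hd))).elim
  trichotomous := by
    intro a b hab hba
    by_contra hne
    have hpost : ({↑a, ↑b} : Set ι) ⊆ notLeast r D {↑a, ↑b} := by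
      rintro _ (rfl | rfl)
      · exact ⟨a.2, b, .inr rfl, .inr ⟨fun e => hne (Subtype.ext e.symm), hab⟩⟩
      · exact ⟨b.2, a, .inl rfl, .inr ⟨fun e => hne (Subtype.ext e), hba⟩⟩
    exact (h.subset ((notLeast r D).le_gfp hpost (.inl rfl))).elim

end NotLeast

theorem mem_WO_iff {x : R} : x ∈ WO ↔ (notLeast (rel x) (field x)).gfp = ∅ :=
  ⟨gfp_notLeast_eq_empty, isWellOrder_of_gfp_notLeast_eq_empty⟩

/-- The elements of the field of `x` surviving `α` rounds, each of which removes the elements that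
no remaining element prevents from being the least one. -/
noncomputable def survivors (x : R) (α : Ordinal.{0}) : Set ℕ :=
  OrdinalApprox.gfpApprox (notLeast (rel x) (field x)) (field x) α

section Survivors

variable {x : R} {α : Ordinal.{0}} {n : ℕ}

theorem survivors_zero : survivors x 0 = field x := OrdinalApprox.gfpApprox_zero ..

theorem survivors_add_one :
    survivors x (α + 1) = notLeast (rel x) (field x) (survivors x α) :=
  OrdinalApprox.gfpApprox_add_one _ notLeast_subset α

theorem survivors_antitone : Antitone (survivors x) := OrdinalApprox.gfpApprox_anti_right ..

theorem mem_survivors_iff_of_isSuccLimit (hα : Order.IsSuccLimit α) :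
    n ∈ survivors x α ↔ ∀ β < α, n ∈ survivors x β := by
  rw [survivors, OrdinalApprox.gfpApprox_of_isSuccLimit _ hα]
  simp only [Set.iInf_eq_iInter, Set.mem_iInter, Subtype.forall, Set.mem_Iio, survivors]

theorem mem_survivors_add_one :
    n ∈ survivors x (α + 1) ↔
      n ∈ field x ∧ ∃ k ∈ survivors x α, rel x k n ∨ k ≠ n ∧ ¬ rel x n k := by
  rw [survivors_add_one, mem_notLeast]

variable (x) in
theorem exists_survivors_add_one_eq : ∃ α, survivors x (α + 1) = survivors x α :=
  ⟨_, survivors_add_one.trans (OrdinalApprox.gfpApprox_ord_mem_fixedPoint _ notLeast_subset)⟩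

theorem gfp_notLeast_eq_survivors (h : survivors x (α + 1) = survivors x α) :
    (notLeast (rel x) (field x)).gfp = survivors x α :=
  le_antisymm
    (OrdinalApprox.le_gfpApprox_of_mem_fixedPoints _ (OrderHom.map_gfp _) gfp_notLeast_subset α)
    (OrderHom.le_gfp _ (h.symm.trans survivors_add_one).le)

end Survivors

/-! ### Shells of the pairing function -/

theorem mul_self_le_pair {a b n : ℕ} (h : n = a ∨ n = b) : n * n ≤ Nat.pair a b :=
  calc
    n * n ≤ max a b * max a b := Nat.mul_self_le_mul_self (by omega)
    _ ≤ max a b ^ 2 + min a b := by rw [sq]; exact Nat.le_add_right ..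
    _ ≤ Nat.pair a b := Nat.max_sq_add_min_le_pair a b

theorem mul_self_eq_pair_add_one_iff {a b n : ℕ} :
    n * n = Nat.pair a b + 1 ↔ a = b ∧ n = a + 1 := by
  constructor
  · intro h
    have hn : max a b < n := Nat.mul_self_lt_mul_self_iff.1 <| by
      rw [h, ← sq]
      exact Nat.lt_succ_of_le (le_self_add.trans (Nat.max_sq_add_min_le_pair a b))
    have hn' : n ≤ max a b + 1 := Nat.mul_self_le_mul_self_iff.1 <| by
      nlinarith [Nat.pair_lt_max_add_one_sq a b]
    obtain rfl : n = max a b + 1 := by omega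
    unfold Nat.pair at h
    split_ifs at h with hab
    · rw [max_eq_right hab.le] at h
      nlinarith
    · rw [max_eq_left (by omega)] at h ⊢
      exact ⟨by nlinarith, rfl⟩
  · rintro ⟨rfl, rfl⟩
    simp only [Nat.pair, lt_irrefl, if_false]
    ring

/-- The natural numbers enumerate all pairs shell by shell: shell `m` consists of the pairs `(a, m)`
with `a < m`, followed by the pairs `(m, a)` with `a ≤ m`. In `InShell m r a p` the number `p` codes
the pair formed by `a` and `m`, and `r` tells which of the two parts it belongs to. -/
inductive InShell (m : ℕ) : Bool → ℕ → ℕ → Prop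
  | col {a : ℕ} : a < m → InShell m false a (Nat.pair a m)
  | row {a : ℕ} : a ≤ m → InShell m true a (Nat.pair m a)

namespace InShell

variable {m a p : ℕ} {r : Bool}

theorem zero : InShell 0 true 0 0 := row le_rfl

theorem add_one (h : InShell m r a p) (ha : a < m) (hr : r = true ∨ a + 1 ≠ m) :
    InShell m r (a + 1) (p + 1) := by
  cases h with
  | col _ =>
    have ham : a + 1 < m := by grind
    have : Nat.pair a m + 1 = Nat.pair (a + 1) m := by
      simp only [Nat.pair, ha, ham, if_true, add_assoc]
    exact this ▸ col ham
  | row _ =>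
    have : Nat.pair m a + 1 = Nat.pair m (a + 1) := by
      simp only [Nat.pair, ha.not_gt, (Nat.succ_le_of_lt ha).not_gt, if_false, add_assoc]
    exact this ▸ row ha

theorem row_zero (h : InShell m false a p) (ha : a + 1 = m) : InShell m true 0 (p + 1) := by
  obtain ⟨hlt⟩ := h
  have : Nat.pair a m + 1 = Nat.pair m 0 := by
    simp only [Nat.pair, hlt, if_true, not_lt_zero, if_false]
    omega
  exact this ▸ row (Nat.zero_le m)

theorem eq_pair (h : InShell m r m p) : p = Nat.pair m m := by
  cases h <;> rfl

theorem col_zero (h : InShell m r m p) : InShell (m + 1) false 0 (p + 1) := by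
  have : Nat.pair m m + 1 = Nat.pair 0 (m + 1) := by
    simp only [Nat.pair, lt_irrefl, if_false, Nat.succ_pos, if_true]
    ring
  exact h.eq_pair ▸ this ▸ col m.succ_pos

theorem le (h : InShell m r a p) : a ≤ m := by
  cases h with
  | col h => exact h.le
  | row h => exact h

theorem mul_self_le (h : InShell m r a p) : m * m ≤ p := by
  cases h with
  | col _ => exact mul_self_le_pair (.inr rfl)
  | row _ => exact mul_self_le_pair (.inl rfl)

end InShell

/-! ### The ledger -/

/-- The information kept on the scratch tape: `alive` records the numbers that have survived so
far, `kept` those of them that have been found to survive the current round, `changed` whether some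
number has been dropped, and `nonempty` whether some number is alive. -/
@[ext]
structure Ledger where
  changed : Bool
  nonempty : Bool
  alive : ℕ → Bool
  kept : ℕ → Bool

namespace Ledger

/-- The scratch tape carrying a ledger: the two flags, followed by `alive` and `kept`
interleaved. -/
def tape (ℓ : Ledger) : ℕ → Bool
  | 0 => ℓ.changed
  | 1 => ℓ.nonempty
  | n + 2 => if n % 2 = 0 then ℓ.alive (n / 2) else ℓ.kept (n / 2)

/-- The ledger carried by a scratch tape. -/
def ofTape (u : ℕ → Bool) : Ledger where
  changed := u 0
  nonempty := u 1
  alive n := u (2 * n + 2)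
  kept n := u (2 * n + 3)

section Tape

variable (ℓ : Ledger) (n : ℕ) (b : Bool)

@[simp] theorem tape_zero : ℓ.tape 0 = ℓ.changed := rfl

@[simp] theorem tape_one : ℓ.tape 1 = ℓ.nonempty := rfl

@[simp] theorem tape_alive : ℓ.tape (2 * n + 2) = ℓ.alive n := by
  simp [tape]

@[simp] theorem tape_kept : ℓ.tape (2 * n + 3) = ℓ.kept n := by
  simp [tape, show (2 * n + 1) / 2 = n by omega, show (2 * n + 1) % 2 = 1 by omega]

theorem cell_cases {p : ℕ → Prop} (h0 : p 0) (h1 : p 1) (halive : ∀ n, p (2 * n + 2))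
    (hkept : ∀ n, p (2 * n + 3)) : ∀ n, p n
  | 0 => h0
  | 1 => h1
  | n + 2 => by
    obtain ⟨k, rfl | rfl⟩ := n.even_or_odd'
    · exact halive k
    · exact hkept k

theorem tape_ofTape (u : ℕ → Bool) : (ofTape u).tape = u :=
  funext (cell_cases rfl rfl (tape_alive _) (tape_kept _))

theorem tape_update_changed : { ℓ with changed := b }.tape = update ℓ.tape 0 b :=
  funext (cell_cases (by simp) (by simp) (by simp) (by simp))

theorem tape_update_nonempty : { ℓ with nonempty := b }.tape = update ℓ.tape 1 b :=
  funext (cell_cases (by simp) (by simp) (by simp) (by simp))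

theorem tape_update_alive :
    { ℓ with alive := update ℓ.alive n b }.tape = update ℓ.tape (2 * n + 2) b :=
  funext (cell_cases (by simp) (by simp) (by simp [update_apply])
    fun k => by rw [update_of_ne (by omega), tape_kept, tape_kept])

theorem tape_update_kept :
    { ℓ with kept := update ℓ.kept n b }.tape = update ℓ.tape (2 * n + 3) b :=
  funext (cell_cases (by simp) (by simp)
    (fun k => by rw [update_of_ne (by omega), tape_alive, tape_alive]) (by simp [update_apply]))

end Tape

section Bookkeeping

variable (ℓ : Ledger) (first : Bool) (n : ℕ)

/-- Whether `n` is still alive when a round begins with the ledger `ℓ`. The first round begins with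
all numbers. -/
def stillAlive : Bool := first || (ℓ.alive n && ℓ.kept n)

/-- Whether the previous round has removed `n`. -/
def dropped : Bool := ℓ.alive n && !ℓ.kept n

/-- The ledger after the condition `c` for keeping `n` has been evaluated. -/
def keep (c : Bool) : Ledger := { ℓ with kept := update ℓ.kept n (ℓ.kept n || c) }

/-- The ledger after `n` has been prepared for a round. -/
def openAccount : Ledger where
  changed := ℓ.changed || ℓ.dropped n
  nonempty := ℓ.nonempty || ℓ.stillAlive first n
  alive := update ℓ.alive n (ℓ.stillAlive first n)
  kept := update ℓ.kept n false

/-- The ledger `ℓ` with the two flags set for a new round. -/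
def reset (changed : Bool) : Ledger := { ℓ with changed := changed, nonempty := false }

theorem tape_reset (b : Bool) : (ℓ.reset b).tape = update (update ℓ.tape 1 false) 0 b := by
  rw [← tape_update_nonempty, ← tape_update_changed, reset]

theorem tape_keep (b : Bool) :
    (ℓ.keep n b).tape = update ℓ.tape (2 * n + 3) (ℓ.tape (2 * n + 3) || b) := by
  rw [tape_kept, ← tape_update_kept, keep]

theorem tape_openAccount :
    (ℓ.openAccount first n).tape =
      let u := update (update ℓ.tape (2 * n + 3) false) (2 * n + 2) (ℓ.stillAlive first n)
      update (update u 1 (u 1 || ℓ.stillAlive first n)) 0 (u 0 || ℓ.dropped n) :=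
  by simp only [← tape_update_kept, ← tape_update_alive, ← tape_update_nonempty,
    ← tape_update_changed, tape_zero, tape_one, openAccount]

end Bookkeeping

/-- Whether the bit `p` of `x` is a reason for keeping `n`: in the first round because `n` occurs in
it, later because it shows that a number in `alive` prevents `n` from being the least one. -/
def keeps (x : R) (first : Bool) (alive : ℕ → Bool) (p n : ℕ) : Bool :=
  if first then x p && (n == p.unpair.1 || n == p.unpair.2)
  else if x p then n == p.unpair.2 && alive p.unpair.1
  else p.unpair.1 != p.unpair.2 && n == p.unpair.1 && alive p.unpair.2

/-- The ledger after the bit `p` has been evaluated. -/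
def scan (x : R) (first : Bool) (p : ℕ) (ℓ : Ledger) : Ledger :=
  { ℓ with kept := fun n => ℓ.kept n || keeps x first ℓ.alive p n }

/-- The ledger in the course of a round that begins with `ℓ`, when the phases in `T` have been
carried out. Phase `n * n` opens the account of `n`, and phase `p + 1` evaluates the bit `p`. -/
noncomputable def during (x : R) (first : Bool) (ℓ : Ledger) (T : Set ℕ) : Ledger where
  changed := ℓ.changed || decide (∃ n, n * n ∈ T ∧ ℓ.dropped n)
  nonempty := ℓ.nonempty || decide (∃ n, n * n ∈ T ∧ ℓ.stillAlive first n)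
  alive n := if n * n ∈ T then ℓ.stillAlive first n else ℓ.alive n
  kept n :=
    if n * n ∈ T then decide (∃ p, p + 1 ∈ T ∧ keeps x first (ℓ.stillAlive first) p n)
    else ℓ.kept n

section During

variable {x : R} {first : Bool} {ℓ : Ledger}

theorem mul_self_le_of_keeps {alive : ℕ → Bool} {p n : ℕ} (h : keeps x first alive p n) :
    n * n ≤ p := by
  rw [← Nat.pair_unpair p]
  apply mul_self_le_pair
  unfold keeps at h
  split_ifs at h <;> simp only [Bool.and_eq_true, Bool.or_eq_true, beq_iff_eq] at h <;> tauto

theorem keeps_congr {alive alive' : ℕ → Bool} {p : ℕ}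
    (h : ∀ n, n * n ≤ p → alive n = alive' n) : keeps x first alive p = keeps x first alive' p := by
  have h₁ := h p.unpair.1 ((mul_self_le_pair (.inl rfl)).trans_eq p.pair_unpair)
  have h₂ := h p.unpair.2 ((mul_self_le_pair (.inr rfl)).trans_eq p.pair_unpair)
  funext n
  rw [keeps, keeps, h₁, h₂]

/-- Whether a bit `y` of `x` is a reason for keeping the smaller member of its pair, when `alive` is
the state of the larger one. -/
def keepsLower (first row y alive : Bool) : Bool := if first then y else y == row && alive

/-- Whether a bit `y` of `x` is a reason for keeping the larger member of its pair, when `alive` is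
the state of the smaller one. -/
def keepsUpper (first row y alive : Bool) : Bool := if first then y else y != row && alive

theorem scan_of_inShell {m a p : ℕ} {r : Bool} (h : InShell m r a p) (ham : a ≠ m) :
    ℓ.scan x first p =
      (ℓ.keep a (keepsLower first r (x p) (ℓ.alive m))).keep m
        (keepsUpper first r (x p) (ℓ.alive a)) := by
  ext n
  case kept =>
    cases h <;>
      simp only [scan, keep, update_apply, keeps, keepsLower, keepsUpper, Nat.unpair_pair] <;>
      grind
  all_goals rfl

theorem scan_of_inShell_self {m p : ℕ} {r : Bool} (h : InShell m r m p) :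
    ℓ.scan x first p = ℓ.keep m (x p && (first || ℓ.alive m)) := by
  ext n
  case kept =>
    simp only [scan, keep, update_apply, h.eq_pair, keeps, Nat.unpair_pair]
    grind
  all_goals rfl

theorem during_Iio_zero : during x first ℓ (Set.Iio 0) = ℓ := by
  ext <;> simp [during]

theorem during_Iio_one : during x first ℓ (Set.Iio 1) = ℓ.openAccount first 0 := by
  ext n <;> simp +contextual [during, openAccount, update_apply]

section Untouched

variable {p n : ℕ} (hn : p < n * n)
include hn

theorem alive_scan_during_of_lt :
    ((during x first ℓ (Set.Iio (p + 1))).scan x first p).alive n = ℓ.alive n :=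
  if_neg (Nat.not_lt.2 hn)

theorem kept_scan_during_of_lt :
    ((during x first ℓ (Set.Iio (p + 1))).scan x first p).kept n = ℓ.kept n := by
  have hn' : ¬ n * n < p + 1 := Nat.not_lt.2 hn
  simp only [scan, mt mul_self_le_of_keeps hn.not_ge, Bool.or_false, during, Set.mem_Iio, hn',
    if_false]

theorem stillAlive_scan_during_of_lt :
    ((during x first ℓ (Set.Iio (p + 1))).scan x first p).stillAlive first n =
      ℓ.stillAlive first n := by
  rw [stillAlive, alive_scan_during_of_lt hn, kept_scan_during_of_lt hn, stillAlive]

theorem dropped_scan_during_of_lt :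
    ((during x first ℓ (Set.Iio (p + 1))).scan x first p).dropped n = ℓ.dropped n := by
  rw [dropped, alive_scan_during_of_lt hn, kept_scan_during_of_lt hn, dropped]

end Untouched

theorem kept_during_Iio_add_two {p n : ℕ} (hn : n * n ≠ p + 1) :
    (during x first ℓ (Set.Iio (p + 2))).kept n =
      ((during x first ℓ (Set.Iio (p + 1))).scan x first p).kept n := by
  by_cases hnp : n * n < p + 1
  · have hkeeps : keeps x first (during x first ℓ (Set.Iio (p + 1))).alive p =
        keeps x first (ℓ.stillAlive first) p :=
      keeps_congr fun k hk => if_pos (Nat.lt_succ_of_le hk)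
    have hp (q : ℕ) : q < p + 1 ↔ q < p ∨ q = p := Nat.lt_succ_iff_lt_or_eq
    rw [scan, hkeeps]
    simp only [during, Set.mem_Iio, hnp, hnp.trans (Nat.lt_succ_self _), if_true,
      Nat.add_lt_add_iff_right]
    simp only [hp, or_and_right, exists_or, exists_eq_left, Bool.decide_or, Bool.decide_eq_true]
  · have hnp' : ¬ n * n < p + 2 := by omega
    rw [kept_scan_during_of_lt (by omega)]
    exact if_neg hnp'

theorem during_Iio_add_two_of_ne {a b : ℕ} (h : a ≠ b) :
    during x first ℓ (Set.Iio (Nat.pair a b + 2)) =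
      (during x first ℓ (Set.Iio (Nat.pair a b + 1))).scan x first (Nat.pair a b) := by
  have hne (n : ℕ) : n * n ≠ Nat.pair a b + 1 := fun e => h (mul_self_eq_pair_add_one_iff.1 e).1
  have hT (n : ℕ) : n * n < Nat.pair a b + 2 ↔ n * n < Nat.pair a b + 1 := by
    have := hne n
    omega
  ext n
  case kept => rw [kept_during_Iio_add_two (hne n)]
  all_goals simp only [during, scan, Set.mem_Iio, hT]

theorem during_Iio_add_two_of_eq (m : ℕ) :
    during x first ℓ (Set.Iio (Nat.pair m m + 2)) =
      ((during x first ℓ (Set.Iio (Nat.pair m m + 1))).scan x first (Nat.pair m m)).openAccount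
        first (m + 1) := by
  set p := Nat.pair m m
  have hm (n : ℕ) : n * n = p + 1 ↔ n = m + 1 := by
    rw [mul_self_eq_pair_add_one_iff, eq_self, true_and]
  have hT (n : ℕ) : n * n < p + 2 ↔ n * n < p + 1 ∨ n = m + 1 := by
    rw [← hm]
    omega
  have hp : p < (m + 1) * (m + 1) := by
    rw [(hm _).2 rfl]
    exact Nat.lt_succ_self p
  ext n
  · rw [openAccount, dropped_scan_during_of_lt hp]
    simp only [during, scan, Set.mem_Iio, hT, or_and_right, exists_or, exists_eq_left,
      Bool.decide_or, Bool.decide_eq_true, Bool.or_assoc]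
  · rw [openAccount, stillAlive_scan_during_of_lt hp]
    simp only [during, scan, Set.mem_Iio, hT, or_and_right, exists_or, exists_eq_left,
      Bool.decide_or, Bool.decide_eq_true, Bool.or_assoc]
  · rw [openAccount, stillAlive_scan_during_of_lt hp]
    simp only [during, scan, Set.mem_Iio, hT, update_apply]
    by_cases hn : n = m + 1
    · rw [if_pos (.inr hn), if_pos hn, hn]
    · simp only [hn, or_false, if_false]
  · simp only [openAccount, update_apply]
    split_ifs with hn
    · refine (if_pos ((hT n).2 (.inr hn))).trans (decide_eq_false ?_)
      rintro ⟨q, hq, hqn⟩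
      have := mul_self_le_of_keeps hqn
      rw [(hm n).2 hn] at this
      exact absurd hq (by simp only [Set.mem_Iio]; omega)
    · exact kept_during_Iio_add_two (mt (hm n).1 hn)

theorem during_Iio_add_two_of_inShell {m a p : ℕ} {r : Bool} (h : InShell m r a p) (ham : a ≠ m) :
    during x first ℓ (Set.Iio (p + 2)) =
      (during x first ℓ (Set.Iio (p + 1))).scan x first p := by
  cases h with
  | col _ => exact during_Iio_add_two_of_ne ham
  | row _ => exact during_Iio_add_two_of_ne ham.symm

theorem eventually_during_tape (n : ℕ) :
    ∀ᶠ k in atTop, (during x first ℓ (Set.Iio k)).tape n = (during x first ℓ Set.univ).tape n := by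
  have hmem (n : ℕ) : ∀ᶠ k in atTop, n ∈ Set.Iio k := eventually_gt_atTop n
  have hex (f : ℕ → ℕ) (p : ℕ → Prop) :
      ∀ᶠ k in atTop, decide (∃ n, f n ∈ Set.Iio k ∧ p n) = decide (∃ n, f n ∈ Set.univ ∧ p n) := by
    by_cases h : ∃ n, p n
    · obtain ⟨n, hn⟩ := h
      filter_upwards [hmem (f n)] with k hk
      rw [decide_eq_true ⟨n, hk, hn⟩, decide_eq_true ⟨n, trivial, hn⟩]
    · simp only [not_exists.1 h, and_false, eventually_const]
  induction n using cell_cases with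
  | h0 => exact (hex _ _).mono fun k hk => congrArg (ℓ.changed || ·) hk
  | h1 => exact (hex _ _).mono fun k hk => congrArg (ℓ.nonempty || ·) hk
  | halive n =>
    filter_upwards [hmem (n * n)] with k hk
    rw [tape_alive, tape_alive]
    exact (if_pos hk).trans (if_pos trivial).symm
  | hkept n =>
    filter_upwards [hmem (n * n), hex (· + 1) _] with k hk hk'
    rw [tape_kept, tape_kept]
    exact ((if_pos hk).trans hk').trans (if_pos trivial).symm

end During

end Ledger

open Set

/-! ### The program -/

namespace Decider

/-- The control states. The boolean arguments are bits that the program remembers. -/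
inductive Control
  | halt
  | limit
  | readMark (changed flash : Bool)
  | answer (nonempty : Bool)
  | erase
  | flash (changed : Bool)
  | plantMark
  | unflash
  | enter
  | clear2
  | clear3
  | clear4
  | plantBit
  | back4
  | back3
  | readAlive
  | readKept (alive : Bool)
  | writeAlive (new removed : Bool)
  | toHeader (new removed : Bool)
  | writeChanged (removed : Bool)
  | leaveHeader
  | plantLower
  | updateUpper (c : Bool)
  | toBit
  | seekBit (i : Fin 5)
  | carryBit (y : Bool) (i : Fin 5)
  | advanceBit (y : Bool)
  | toUpper (y : Bool)
  | readUpper (y : Bool)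
  | toLower (y alive : Bool)
  | updateLower (lower upper : Bool)
  | nextLower (upper : Bool)
  | atUpper (upper : Bool)
  | clearLower
  | updateDiagonal (c : Bool)
  deriving Fintype

/-- A state consists of a control state, a bit telling whether this is the first round, and a bit
telling in which part of the current shell (see `InShell`) the program is. -/
structure State where
  control : Control
  first : Bool
  row : Bool
  deriving Fintype

/-- The transition table. The scratch tape carries a `Ledger`. On the output tape, cell `0` is a
flag which a round sets and resets, so that it is set at limits of rounds; cell `1` is marked until
the tape is erased; and while the bit `p` coding the pair formed by `a` and `m` is evaluated, the
cells `2 * a + 2`, `2 * m + 3` and `p + 5` are marked, below cell `p + 6`. -/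
def next : State → Bool → Bool → Bool → State × Bool × Bool × Bool
  | ⟨c, f, r⟩, y, u, v =>
    match c with
    | .halt => (⟨.halt, f, r⟩, u, v, true)
    | .limit => (⟨.readMark u v, f, r⟩, u, v, true)
    | .readMark changed flash =>
      match v, changed with
      | false, _ => (⟨.answer u, f, r⟩, u, false, false)
      | true, false => (⟨.erase, f, r⟩, u, false, false)
      | true, true => (⟨.flash flash, f, r⟩, false, true, false)
    | .answer nonempty => (⟨.halt, f, r⟩, u, !nonempty, true)
    | .erase => (⟨.erase, f, r⟩, u, false, true)
    | .flash changed => (⟨.plantMark, f, r⟩, changed, true, true)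
    | .plantMark => (⟨.unflash, f, r⟩, u, true, false)
    | .unflash => (⟨.enter, f, r⟩, u, f, true)
    | .enter => (⟨.clear2, f, r⟩, u, v, true)
    | .clear2 => (⟨.clear3, f, r⟩, u, false, true)
    | .clear3 => (⟨.clear4, f, r⟩, u, false, true)
    | .clear4 => (⟨.plantBit, f, r⟩, u, false, true)
    | .plantBit => (⟨.back4, f, r⟩, u, true, false)
    | .back4 => (⟨.back3, f, r⟩, u, v, false)
    | .back3 => (⟨.readAlive, f, r⟩, u, v, false)
    | .readAlive => (⟨.readKept u, f, r⟩, u, v, true)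
    | .readKept alive =>
      (⟨.writeAlive (f || (alive && u)) (alive && !u), f, r⟩, false, true, false)
    | .writeAlive new removed => (⟨.toHeader new removed, f, r⟩, new, v, false)
    | .toHeader new removed =>
      match v with
      | true => (⟨.writeChanged removed, f, r⟩, u || new, true, false)
      | false => (⟨.toHeader new removed, f, r⟩, u, false, false)
    | .writeChanged removed => (⟨.leaveHeader, f, r⟩, u || removed, v, true)
    | .leaveHeader => (⟨.plantLower, f, r⟩, u, v, true)
    | .plantLower => (⟨.updateUpper false, f, r⟩, u, true, true)
    | .updateUpper c =>
      match v with
      | true => (⟨.toBit, f, r⟩, u || c, true, true)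
      | false => (⟨.updateUpper c, f, r⟩, u, false, true)
    | .toBit =>
      match v with
      | true => (⟨.seekBit 4, f, r⟩, u, true, false)
      | false => (⟨.toBit, f, r⟩, u, false, true)
    | .seekBit 0 => (⟨.carryBit y 4, f, r⟩, u, v, true)
    | .seekBit 1 => (⟨.seekBit 0, f, r⟩, u, v, false)
    | .seekBit 2 => (⟨.seekBit 1, f, r⟩, u, v, false)
    | .seekBit 3 => (⟨.seekBit 2, f, r⟩, u, v, false)
    | .seekBit 4 => (⟨.seekBit 3, f, r⟩, u, v, false)
    | .carryBit z 0 => (⟨.advanceBit z, f, r⟩, u, false, true)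
    | .carryBit z 1 => (⟨.carryBit z 0, f, r⟩, u, v, true)
    | .carryBit z 2 => (⟨.carryBit z 1, f, r⟩, u, v, true)
    | .carryBit z 3 => (⟨.carryBit z 2, f, r⟩, u, v, true)
    | .carryBit z 4 => (⟨.carryBit z 3, f, r⟩, u, v, true)
    | .advanceBit z => (⟨.toUpper z, f, r⟩, u, true, false)
    | .toUpper z =>
      match v with
      | true => (⟨.readUpper z, f, r⟩, u, true, false)
      | false => (⟨.toUpper z, f, r⟩, u, false, false)
    | .readUpper z =>
      match v with
      | true => (⟨.updateDiagonal (z && (f || u)), f, r⟩, u, false, true)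
      | false => (⟨.toLower z u, f, r⟩, u, false, false)
    | .toLower z alive =>
      match v with
      | true =>
        (⟨.updateLower (Ledger.keepsLower f r z alive) (Ledger.keepsUpper f r z u), f, r⟩,
          u, false, true)
      | false => (⟨.toLower z alive, f, r⟩, u, false, false)
    | .updateLower lower upper => (⟨.nextLower upper, f, r⟩, u || lower, v, true)
    | .nextLower upper => (⟨.atUpper upper, f, r⟩, u, true, true)
    | .atUpper upper =>
      match v, r with
      | true, true => (⟨.toBit, f, true⟩, u || upper, true, true)
      | true, false => (⟨.clearLower, f, false⟩, u || upper, true, false)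
      | false, r => (⟨.updateUpper upper, f, r⟩, u, false, true)
    | .clearLower => (⟨.toHeader false false, f, true⟩, u, false, false)
    | .updateDiagonal c => (⟨.readAlive, f, false⟩, u || c, false, true)

end Decider

open Decider

/-- The program deciding `WO`. Every round takes `ω` steps. -/
def decider : Program State where
  start := ⟨.flash true, true, true⟩
  limit := ⟨.limit, false, true⟩
  halt := ⟨.halt, false, true⟩
  next := next

namespace Decider

instance : Nonempty State := ⟨decider.start⟩

/-- Every cell of `w` agrees with the corresponding cell of `u` or of `u'`. -/
def Between (u u' w : ℕ → Bool) : Prop := ∀ n, w n = u n ∨ w n = u' n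

section Between

variable {u u' w w' t : ℕ → Bool} {i j : ℕ} {b b' : Bool}

theorem between_left : Between u u' u := fun _ => .inl rfl

theorem between_right : Between u u' u' := fun _ => .inr rfl

theorem Between.hull (hw : Between u u' w) (hw' : Between u u' w') (ht : Between w w' t) :
    Between u u' t := fun n => by
  obtain h | h := ht n
  · exact h ▸ hw n
  · exact h ▸ hw' n

theorem Between.update_right (h : Between u u' w) (hi : w i = u i) :
    Between u (update u' i b) w := fun n => by
  by_cases hn : n = i
  · exact .inl (hn ▸ hi)
  · rw [update_of_ne hn]
    exact h n

end Between

/-- The output tape `v` has the flag `μ` in cell `0` and is marked in cell `1` and, among the cells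
between `2` and `P`, exactly in those belonging to `S`. -/
structure Marked (v : ℕ → Bool) (μ : Bool) (P : ℕ) (S : Set ℕ) : Prop where
  zero : v 0 = μ
  one : v 1 = true
  mem : ∀ c, 2 ≤ c → c ≤ P → (v c = true ↔ c ∈ S)

/-- The condition on the configurations during a stretch of a round that replaces the scratch tape
`T` by `T'`. -/
structure Sound (T T' : ℕ → Bool) (μ : Bool) (c : Config State) : Prop where
  ne_halt : c.state.control ≠ .halt
  scratch : Between T T' c.scratch
  zero : c.output 0 = μ
  one : c.output 1 = true

section Marked

variable {v : ℕ → Bool} {μ b : Bool} {P c : ℕ} {S S' : Set ℕ}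

theorem Marked.update (hv : Marked v μ P S) (hc : 2 ≤ c)
    (hS : ∀ d ≤ P, d ∈ S' ↔ if d = c then b = true else d ∈ S) :
    Marked (update v c b) μ P S' where
  zero := by rw [update_of_ne (by omega), hv.zero]
  one := by rw [update_of_ne (by omega), hv.one]
  mem d hd hdP := by
    rw [hS d hdP, update_apply]
    split_ifs
    · rfl
    · exact hv.mem d hd hdP

theorem Marked.update_add_one (hv : Marked v μ P S) (hP : 1 ≤ P)
    (hS : ∀ d ≤ P + 1, d ∈ S' ↔ if d = P + 1 then b = true else d ∈ S) :
    Marked (Function.update v (P + 1) b) μ (P + 1) S' where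
  zero := by rw [update_of_ne (by omega), hv.zero]
  one := by rw [update_of_ne (by omega), hv.one]
  mem d hd hdP := by
    rw [hS d hdP, update_apply]
    split_ifs with h
    · rfl
    · exact hv.mem d hd (by omega)

theorem Marked.eq_true (hv : Marked v μ P S) (hc : 2 ≤ c) (hP : c ≤ P) (hS : c ∈ S) :
    v c = true := (hv.mem c hc hP).2 hS

theorem Marked.eq_false (hv : Marked v μ P S) (hc : 2 ≤ c) (hP : c ≤ P) (hS : c ∉ S) :
    v c = false := Bool.eq_false_iff.2 (mt (hv.mem c hc hP).1 hS)

end Marked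

section Steps

variable {x : R} {T T' u v : ℕ → Bool} {μ b b' : Bool} {E : Config State → Prop} {s s' : State}
  {h h' P : ℕ} {S : Set ℕ}

theorem step_right (e : next s (x h) (u h) (v h) = (s', b, b', true)) :
    decider.step x ⟨s, h, u, v⟩ = ⟨s', h + 1, update u h b, update v h b'⟩ := by
  simp only [Program.step, show decider.next = next from rfl, e, if_true]

theorem step_left
    (e : next s (x (h + 1)) (u (h + 1)) (v (h + 1)) = (s', b, b', false)) :
    decider.step x ⟨s, h + 1, u, v⟩ = ⟨s', h, update u (h + 1) b, update v (h + 1) b'⟩ := by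
  simp only [Program.step, show decider.next = next from rfl, e, Bool.false_eq_true, if_false,
    Nat.add_sub_cancel]

variable (hu : Between T T' u) (hv : Marked v μ P S) (hs : s.control ≠ .halt)

include hu hv hs

theorem stepRight (e : next s (x h) (u h) (v h) = (s', b, b', true))
    (H : decider.Run x (Sound T T' μ) E ⟨s', h + 1, update u h b, update v h b'⟩) :
    decider.Run x (Sound T T' μ) E ⟨s, h, u, v⟩ :=
  .head ⟨hs, hu, hv.zero, hv.one⟩ (step_right e ▸ H)

theorem stepLeft (e : next s (x (h + 1)) (u (h + 1)) (v (h + 1)) = (s', b, b', false))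
    (H : decider.Run x (Sound T T' μ) E ⟨s', h, update u (h + 1) b, update v (h + 1) b'⟩) :
    decider.Run x (Sound T T' μ) E ⟨s, h + 1, u, v⟩ :=
  .head ⟨hs, hu, hv.zero, hv.one⟩ (step_left e ▸ H)

theorem writeRight (e : next s (x h) (u h) (v h) = (s', b, v h, true))
    (H : decider.Run x (Sound T T' μ) E ⟨s', h + 1, update u h b, v⟩) :
    decider.Run x (Sound T T' μ) E ⟨s, h, u, v⟩ :=
  stepRight hu hv hs e (by rwa [update_eq_self])

theorem writeLeft (e : next s (x (h + 1)) (u (h + 1)) (v (h + 1)) = (s', b, v (h + 1), false))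
    (H : decider.Run x (Sound T T' μ) E ⟨s', h, update u (h + 1) b, v⟩) :
    decider.Run x (Sound T T' μ) E ⟨s, h + 1, u, v⟩ :=
  stepLeft hu hv hs e (by rwa [update_eq_self])

theorem markRight (e : next s (x h) (u h) (v h) = (s', u h, b', true))
    (H : decider.Run x (Sound T T' μ) E ⟨s', h + 1, u, update v h b'⟩) :
    decider.Run x (Sound T T' μ) E ⟨s, h, u, v⟩ :=
  stepRight hu hv hs e (by rwa [update_eq_self])

theorem markLeft (e : next s (x (h + 1)) (u (h + 1)) (v (h + 1)) = (s', u (h + 1), b', false))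
    (H : decider.Run x (Sound T T' μ) E ⟨s', h, u, update v (h + 1) b'⟩) :
    decider.Run x (Sound T T' μ) E ⟨s, h + 1, u, v⟩ :=
  stepLeft hu hv hs e (by rwa [update_eq_self])

theorem moveRight (e : next s (x h) (u h) (v h) = (s', u h, v h, true))
    (H : decider.Run x (Sound T T' μ) E ⟨s', h + 1, u, v⟩) :
    decider.Run x (Sound T T' μ) E ⟨s, h, u, v⟩ :=
  writeRight hu hv hs e (by rwa [update_eq_self])

theorem moveLeft
    (e : next s (x (h + 1)) (u (h + 1)) (v (h + 1)) = (s', u (h + 1), v (h + 1), false))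
    (H : decider.Run x (Sound T T' μ) E ⟨s', h, u, v⟩) :
    decider.Run x (Sound T T' μ) E ⟨s, h + 1, u, v⟩ :=
  writeLeft hu hv hs e (by rwa [update_eq_self])

theorem seekRight (e : ∀ y w, next s y w false = (s, w, false, true)) (hh : h ≤ h') (h2 : 2 ≤ h)
    (hP : h' ≤ P + 1) (hS : ∀ c, h ≤ c → c < h' → c ∉ S)
    (H : decider.Run x (Sound T T' μ) E ⟨s, h', u, v⟩) :
    decider.Run x (Sound T T' μ) E ⟨s, h, u, v⟩ := by
  induction hh using Nat.decreasingInduction with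
  | self => exact H
  | of_succ k hk ih =>
    have hvk := hv.eq_false h2 (by omega) (hS k le_rfl hk)
    exact moveRight hu hv hs (by rw [hvk, e]) (ih (by omega) fun c hc => hS c (by omega))

theorem seekLeft (e : ∀ y w, next s y w false = (s, w, false, false)) (hh : h' ≤ h) (h1 : 1 ≤ h')
    (hP : h ≤ P) (hS : ∀ c, h' < c → c ≤ h → c ∉ S)
    (H : decider.Run x (Sound T T' μ) E ⟨s, h', u, v⟩) :
    decider.Run x (Sound T T' μ) E ⟨s, h, u, v⟩ := by
  induction h, hh using Nat.le_induction with
  | base => exact H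
  | succ k hk ih =>
    have hvk := hv.eq_false (by omega) hP (hS (k + 1) (by omega) le_rfl)
    exact moveLeft hu hv hs (by rw [hvk, e]) (ih (by omega) fun c h₁ h₂ => hS c h₁ (by omega))

end Steps

end Decider

namespace Decider

/-- The configurations about to evaluate the bit `P - 5`, which codes the pair formed by `a` and
`m`, with scratch tape `u`. -/
def Poised (μ r : Bool) (m a P : ℕ) (u : ℕ → Bool) (c : Config State) : Prop :=
  ∃ v, Marked v μ P {2 * a + 2, 2 * m + 3, P} ∧ c = ⟨⟨.toBit, μ, r⟩, P, u, v⟩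

section Subroutines

variable {x : R} {T T' u v : ℕ → Bool} {μ r : Bool} {m a P : ℕ}

theorem run_updateUpper {c : Bool} {h : ℕ} (hu : Between T T' u)
    (hu' : Between T T' (update u (2 * m + 3) (u (2 * m + 3) || c)))
    (hv : Marked v μ P {2 * a + 2, 2 * m + 3, P}) (ha : 2 * a + 2 < h) (hm : h ≤ 2 * m + 3)
    (hP : 2 * m + 3 < P) :
    decider.Run x (Sound T T' μ)
      (Poised μ r m a P (update u (2 * m + 3) (u (2 * m + 3) || c)))
      ⟨⟨.updateUpper c, μ, r⟩, h, u, v⟩ := by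
  have hmark : v (2 * m + 3) = true := hv.eq_true (by omega) hP.le (by simp)
  refine seekRight hu hv (by simp) (fun _ _ => rfl) hm (by omega) (by omega) (by grind) ?_
  refine writeRight hu hv (by simp) (by rw [hmark]; rfl) ?_
  exact seekRight hu' hv (by simp) (fun _ _ => rfl) (h' := P) (by omega) (by omega) (by omega)
    (by grind) (.done ⟨v, hv, rfl⟩)

theorem run_toHeader {new removed : Bool} {h : ℕ} (hu : Between T T' u)
    (hu' : Between T T' (update (update u 1 (u 1 || new)) 0 (u 0 || removed)))
    (hv : Marked v μ P {2 * m + 3, P}) (h1 : 1 ≤ h) (hm : h < 2 * m + 3) (hP : 2 * m + 3 < P) :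
    decider.Run x (Sound T T' μ)
      (Poised μ r m 0 P (update (update u 1 (u 1 || new)) 0 (u 0 || removed)))
      ⟨⟨.toHeader new removed, μ, r⟩, h, u, v⟩ := by
  have hu₁ : Between T T' (update u 1 (u 1 || new)) :=
    hu.hull hu' (between_right.update_right rfl)
  have hv' : Marked (update v 2 true) μ P {2 * 0 + 2, 2 * m + 3, P} := hv.update le_rfl (by grind)
  refine seekLeft hu hv (by simp) (fun _ _ => rfl) h1 le_rfl (by omega) (by grind) ?_
  refine writeLeft (s' := ⟨.writeChanged removed, μ, r⟩) hu hv (by simp) (by rw [hv.one]; rfl) ?_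
  refine writeRight (s' := ⟨.leaveHeader, μ, r⟩) hu₁ hv (by simp) rfl ?_
  refine moveRight (s' := ⟨.plantLower, μ, r⟩) hu' hv (by simp) rfl ?_
  refine markRight (s' := ⟨.updateUpper false, μ, r⟩) hu' hv (by simp) rfl ?_
  have H := run_updateUpper (x := x) (r := r) (c := false) (h := 3) hu'
    (by simpa only [Bool.or_false, update_eq_self]) hv' (by omega) (by omega) hP
  rw [Bool.or_false, update_eq_self] at H
  exact H

theorem run_readAlive {ℓ : Ledger} (hu : Between T T' ℓ.tape)
    (hu' : Between T T' (ℓ.openAccount μ m).tape) (hv : Marked v μ P {P}) (hP : 2 * m + 3 < P) :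
    decider.Run x (Sound T T' μ) (Poised μ r m 0 P (ℓ.openAccount μ m).tape)
      ⟨⟨.readAlive, μ, r⟩, 2 * m + 2, ℓ.tape, v⟩ := by
  have hv' : Marked (update v (2 * m + 3) true) μ P {2 * m + 3, P} :=
    hv.update (by omega) (by grind)
  have hu₁ : Between T T' (update ℓ.tape (2 * m + 3) false) := by
    refine hu.hull hu' fun n => ?_
    rw [ℓ.tape_openAccount]
    grind
  have hu₂ : Between T T'
      (update (update ℓ.tape (2 * m + 3) false) (2 * m + 2) (ℓ.stillAlive μ m)) := by
    refine hu.hull hu' fun n => ?_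
    rw [ℓ.tape_openAccount]
    grind
  refine moveRight (s' := ⟨.readKept (ℓ.alive m), μ, r⟩) hu hv (by simp)
    (by rw [ℓ.tape_alive]; rfl) ?_
  refine stepLeft (s' := ⟨.writeAlive (ℓ.stillAlive μ m) (ℓ.dropped m), μ, r⟩) hu hv (by simp)
    (by rw [ℓ.tape_kept]; rfl) ?_
  refine writeLeft (s' := ⟨.toHeader (ℓ.stillAlive μ m) (ℓ.dropped m), μ, r⟩) hu₁ hv' (by simp)
    rfl ?_
  rw [ℓ.tape_openAccount] at hu' ⊢
  exact run_toHeader hu₂ hu' hv' (by omega) (by omega) hP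

theorem run_seekBit {p : ℕ} {E : Config State → Prop} (hu : Between T T' u)
    (hv : Marked v μ (p + 5) {2 * a + 2, 2 * m + 3, p + 5}) (ha : a ≤ m) (hP : 2 * m + 3 < p + 5)
    (H : ∀ v', Marked v' μ (p + 6) {2 * a + 2, 2 * m + 3, p + 6} →
      decider.Run x (Sound T T' μ) E ⟨⟨.readUpper (x p), μ, r⟩, 2 * m + 2, u, v'⟩) :
    decider.Run x (Sound T T' μ) E ⟨⟨.toBit, μ, r⟩, p + 5, u, v⟩ := by
  have hmark : v (p + 5) = true := hv.eq_true (by omega) le_rfl (by simp)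
  have hv₁ : Marked (update v (p + 5) false) μ (p + 5) {2 * a + 2, 2 * m + 3} :=
    hv.update (by omega) (by grind)
  have hv₂ : Marked (update (update v (p + 5) false) (p + 6) true) μ (p + 6)
      {2 * a + 2, 2 * m + 3, p + 6} := hv₁.update_add_one (by omega) (by grind)
  refine moveLeft (s' := ⟨.seekBit 4, μ, r⟩) hu hv (by simp) (by rw [hmark]; rfl) ?_
  refine moveLeft (s' := ⟨.seekBit 3, μ, r⟩) hu hv (by simp) rfl ?_
  refine moveLeft (s' := ⟨.seekBit 2, μ, r⟩) hu hv (by simp) rfl ?_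
  refine moveLeft (s' := ⟨.seekBit 1, μ, r⟩) hu hv (by simp) rfl ?_
  refine moveLeft (s' := ⟨.seekBit 0, μ, r⟩) hu hv (by simp) rfl ?_
  refine moveRight (s' := ⟨.carryBit (x p) 4, μ, r⟩) hu hv (by simp) rfl ?_
  refine moveRight (s' := ⟨.carryBit (x p) 3, μ, r⟩) hu hv (by simp) rfl ?_
  refine moveRight (s' := ⟨.carryBit (x p) 2, μ, r⟩) hu hv (by simp) rfl ?_
  refine moveRight (s' := ⟨.carryBit (x p) 1, μ, r⟩) hu hv (by simp) rfl ?_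
  refine moveRight (s' := ⟨.carryBit (x p) 0, μ, r⟩) hu hv (by simp) rfl ?_
  refine markRight (s' := ⟨.advanceBit (x p), μ, r⟩) hu hv (by simp) rfl ?_
  refine markLeft (s' := ⟨.toUpper (x p), μ, r⟩) hu hv₁ (by simp) rfl ?_
  refine seekLeft (h' := 2 * m + 3) hu hv₂ (by simp) (fun _ _ => rfl) (by omega) (by omega)
    (by omega) (by grind) ?_
  have hmark' := hv₂.eq_true (c := 2 * m + 3) (by omega) (by omega) (by simp)
  exact moveLeft hu hv₂ (by simp) (by rw [hmark']; rfl) (H _ hv₂)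

theorem run_readUpper_of_lt {y : Bool} {E : Config State → Prop} (ha : a < m) (hP : 2 * m + 3 < P)
    (hu : Between T T' u)
    (hu' : Between T T'
      (update u (2 * a + 3) (u (2 * a + 3) || Ledger.keepsLower μ r y (u (2 * m + 2)))))
    (hv : Marked v μ P {2 * a + 2, 2 * m + 3, P})
    (H : ∀ v', Marked v' μ P {2 * (a + 1) + 2, 2 * m + 3, P} → decider.Run x (Sound T T' μ) E
      ⟨⟨.atUpper (Ledger.keepsUpper μ r y (u (2 * a + 2))), μ, r⟩, 2 * a + 5,
        update u (2 * a + 3) (u (2 * a + 3) || Ledger.keepsLower μ r y (u (2 * m + 2))), v'⟩) :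
    decider.Run x (Sound T T' μ) E ⟨⟨.readUpper y, μ, r⟩, 2 * m + 2, u, v⟩ := by
  have hupper : v (2 * m + 2) = false := hv.eq_false (by omega) (by omega) (by grind)
  have hlower : v (2 * a + 2) = true := hv.eq_true (by omega) (by omega) (by simp)
  have hv₁ : Marked (update v (2 * a + 2) false) μ P {2 * m + 3, P} :=
    hv.update (by omega) (by grind)
  have hv₂ : Marked (update (update v (2 * a + 2) false) (2 * a + 4) true) μ P
      {2 * (a + 1) + 2, 2 * m + 3, P} := hv₁.update (by omega) (by grind)
  refine moveLeft (s' := ⟨.toLower y (u (2 * m + 2)), μ, r⟩) hu hv (by simp)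
    (by rw [hupper]; rfl) ?_
  refine seekLeft (h' := 2 * a + 2) hu hv (by simp) (fun _ _ => rfl) (by omega) (by omega)
    (by omega) (by grind) ?_
  refine markRight (s' := ⟨.updateLower _ _, μ, r⟩) hu hv (by simp) (by rw [hlower]; rfl) ?_
  refine writeRight (s' := ⟨.nextLower _, μ, r⟩) hu hv₁ (by simp) rfl ?_
  exact markRight hu' hv₁ (by simp) rfl (H _ hv₂)

theorem run_atUpper {p : ℕ} {c : Bool} (h : InShell m r a p) (ha : a < m) (hP : 2 * m + 3 < P)
    (hu : Between T T' u) (hu' : Between T T' (update u (2 * m + 3) (u (2 * m + 3) || c)))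
    (hv : Marked v μ P {2 * (a + 1) + 2, 2 * m + 3, P}) :
    decider.Run x (Sound T T' μ)
      (fun d => ∃ r' a', InShell m r' a' (p + 1) ∧
        Poised μ r' m a' P (update u (2 * m + 3) (u (2 * m + 3) || c)) d)
      ⟨⟨.atUpper c, μ, r⟩, 2 * a + 5, u, v⟩ := by
  obtain hlt | rfl : a + 1 < m ∨ a + 1 = m := by omega
  · have hmark : v (2 * a + 5) = false := hv.eq_false (by omega) (by omega) (by grind)
    refine moveRight (s' := ⟨.updateUpper c, μ, r⟩) hu hv (by simp) (by rw [hmark]; rfl) ?_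
    exact (run_updateUpper hu hu' hv (by omega) (by omega) hP).mono fun d hd =>
      ⟨r, a + 1, h.add_one ha (.inr hlt.ne), hd⟩
  have hmark : v (2 * a + 5) = true := hv.eq_true (by omega) (by omega) (by simp; omega)
  cases r with
  | true =>
    refine writeRight (s' := ⟨.toBit, μ, true⟩) hu hv (by simp) (by rw [hmark]; rfl) ?_
    exact seekRight (h' := P) hu' hv (by simp) (fun _ _ => rfl) (by omega) (by omega) (by omega)
      (by grind) (.done ⟨true, a + 1, h.add_one ha (.inl rfl), v, hv, rfl⟩)
  | false =>
    have hv' : Marked (update v (2 * a + 4) false) μ P {2 * (a + 1) + 3, P} :=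
      hv.update (by omega) (by grind)
    refine writeLeft (s' := ⟨.clearLower, μ, false⟩) hu hv (by simp) (by rw [hmark]; rfl) ?_
    refine markLeft (s' := ⟨.toHeader false false, μ, true⟩) hu' hv (by simp) rfl ?_
    have H := run_toHeader (x := x) (r := true) (h := 2 * a + 3) (new := false) (removed := false)
      hu' (by simpa only [Bool.or_false, update_eq_self] using hu') hv' (by omega) (by omega) hP
    simp only [Bool.or_false, update_eq_self] at H
    exact H.mono fun d hd => ⟨true, 0, h.row_zero rfl, hd⟩

theorem run_readUpper_self {y : Bool} {ℓ : Ledger} (hP : 2 * m + 5 < P) (hu : Between T T' ℓ.tape)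
    (hu' : Between T T' ((ℓ.keep m (y && (μ || ℓ.alive m))).openAccount μ (m + 1)).tape)
    (hv : Marked v μ P {2 * m + 2, 2 * m + 3, P}) :
    decider.Run x (Sound T T' μ)
      (Poised μ false (m + 1) 0 P
        ((ℓ.keep m (y && (μ || ℓ.alive m))).openAccount μ (m + 1)).tape)
      ⟨⟨.readUpper y, μ, r⟩, 2 * m + 2, ℓ.tape, v⟩ := by
  set c := y && (μ || ℓ.alive m)
  have hmark : v (2 * m + 2) = true := hv.eq_true (by omega) (by omega) (by simp)
  have hv₁ : Marked (update v (2 * m + 2) false) μ P {2 * m + 3, P} :=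
    hv.update (by omega) (by grind)
  have hv₂ : Marked (update (update v (2 * m + 2) false) (2 * m + 3) false) μ P {P} :=
    hv₁.update (by omega) (by grind)
  have hkeep : Between T T' (ℓ.keep m c).tape := by
    refine hu.hull hu' fun n => ?_
    rw [Ledger.tape_openAccount, Ledger.tape_keep]
    grind
  refine markRight (s' := ⟨.updateDiagonal c, μ, r⟩) hu hv (by simp)
    (by rw [hmark, ℓ.tape_alive]; rfl) ?_
  refine stepRight (s' := ⟨.readAlive, μ, false⟩) hu hv₁ (by simp) rfl ?_
  have H := run_readAlive (x := x) (r := false) hkeep hu' hv₂ hP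
  rwa [ℓ.tape_keep] at H

end Subroutines

/-- The configurations in a round beginning with the ledger `ℓ` in which the bit `p` is about to be
evaluated. -/
def AtBit (x : R) (μ : Bool) (ℓ : Ledger) (p : ℕ) (c : Config State) : Prop :=
  ∃ m a r, InShell m r a p ∧ Poised μ r m a (p + 5) (ℓ.during x μ (Iio (p + 1))).tape c

section Round

variable {x : R} {μ : Bool} {ℓ : Ledger}

theorem run_atBit (p : ℕ) (c : Config State) (h : AtBit x μ ℓ p c) :
    decider.Run x
      (Sound (ℓ.during x μ (Iio (p + 1))).tape (ℓ.during x μ (Iio (p + 2))).tape μ)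
      (AtBit x μ ℓ (p + 1)) c := by
  obtain ⟨m, a, r, h, v, hv, rfl⟩ := h
  have hp := h.mul_self_le
  refine run_seekBit between_left hv h.le (by nlinarith) fun v' hv' => ?_
  obtain hlt | rfl := h.le.lt_or_eq
  · have hscan := Ledger.during_Iio_add_two_of_inShell (x := x) (first := μ) (ℓ := ℓ) h hlt.ne
    rw [Ledger.scan_of_inShell h hlt.ne] at hscan
    have hscan' := congrArg Ledger.tape hscan
    rw [Ledger.tape_keep, Ledger.tape_keep, ← Ledger.tape_alive _ m, ← Ledger.tape_alive _ a]
      at hscan'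
    have hne : 2 * m + 3 ≠ 2 * a + 3 := by omega
    rw [hscan']
    refine run_readUpper_of_lt hlt (by nlinarith) between_left
      (between_right.update_right (update_of_ne hne ..)) hv' fun v'' hv'' => ?_
    refine Program.Run.mono (run_atUpper h hlt (by nlinarith)
      (between_right.update_right (update_of_ne hne ..)) between_right hv'')
      fun d ⟨r', a', h', hd⟩ => ⟨m, a', r', h', ?_⟩
    rwa [hscan']
  · have hp' : p = a * a + a + a := by simp only [h.eq_pair, Nat.pair, lt_irrefl, if_false]
    have hdiag := Ledger.during_Iio_add_two_of_eq (x := x) (first := μ) (ℓ := ℓ) a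
    rw [← h.eq_pair, Ledger.scan_of_inShell_self h] at hdiag
    rw [hdiag]
    refine Program.Run.mono (run_readUpper_self (by nlinarith) between_left between_right hv')
      fun d hd => ⟨a + 1, 0, false, h.col_zero, ?_⟩
    rwa [hdiag]

end Round

end Decider

namespace Decider

/-! ### Rounds -/

/-- The configurations in which the flag has been set for the round that begins with `ℓ`. -/
def Flashed (μ : Bool) (ℓ : Ledger) (c : Config State) : Prop :=
  ∃ v, v 0 = true ∧ c = ⟨⟨.plantMark, μ, true⟩, 1, ℓ.tape, v⟩

/-- The configurations in which the round beginning with `ℓ` has been set up up to the output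
cells `2` to `5`. -/
def Entered (μ : Bool) (ℓ : Ledger) (c : Config State) : Prop :=
  ∃ v, Marked v μ 1 ∅ ∧ c = ⟨⟨.enter, μ, true⟩, 1, ℓ.tape, v⟩

/-- The condition on the configurations during the setup of a round. -/
def Opening (ℓ : Ledger) (c : Config State) : Prop :=
  c.state.control ≠ .halt ∧ ∀ n, c.scratch (2 * n + 2) = ℓ.alive n

/-- The configurations from which the program carries out the round beginning with `ℓ`. -/
def RoundStart (x : R) (μ : Bool) (ℓ : Ledger) (c : Config State) : Prop :=
  decider.Run x (Opening ℓ) (Flashed μ ℓ) c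

/-- The configurations at the beginning of phase `p` of the round beginning with `ℓ`. -/
def Phase (x : R) (μ : Bool) (ℓ : Ledger) : ℕ → Config State → Prop
  | 0 => Entered μ ℓ
  | p + 1 => AtBit x μ ℓ p

section Setup

variable {x : R} {μ : Bool} {ℓ : Ledger} {c : Config State} {v : ℕ → Bool}

theorem roundStart_start :
    RoundStart x true ((Ledger.ofTape zeroR).reset true)
      ⟨⟨.flash true, true, true⟩, 0, zeroR, zeroR⟩ := by
  have hnonempty : update zeroR 1 false = zeroR := update_eq_self_iff.2 rfl
  refine .head ⟨by simp, fun _ => rfl⟩ (.done ?_)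
  rw [step_right rfl, Flashed, Ledger.tape_reset, Ledger.tape_ofTape, hnonempty]
  exact ⟨_, update_self .., rfl⟩

theorem roundStart_limit (hchanged : ℓ.changed = true) (hv : v 1 = true) :
    RoundStart x false (ℓ.reset (v 0)) ⟨⟨.limit, false, true⟩, 0, ℓ.tape, v⟩ := by
  have hchanged' : ℓ.tape 0 = true := hchanged
  have halive (n : ℕ) : update ℓ.tape 1 false (2 * n + 2) = ℓ.alive n := by
    rw [update_of_ne (by omega), ℓ.tape_alive]
  have h₁ : decider.step x ⟨⟨.limit, false, true⟩, 0, ℓ.tape, v⟩ =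
      ⟨⟨.readMark true (v 0), false, true⟩, 1, ℓ.tape, v⟩ := by
    rw [step_right rfl, update_eq_self, update_eq_self, hchanged']
  have h₂ : decider.step x ⟨⟨.readMark true (v 0), false, true⟩, 1, ℓ.tape, v⟩ =
      ⟨⟨.flash (v 0), false, true⟩, 0, update ℓ.tape 1 false, v⟩ := by
    rw [step_left (by rw [hv]; rfl)]
    nth_rw 2 [← hv]
    rw [update_eq_self]
  refine .head ⟨by simp, ℓ.tape_alive⟩ ?_
  rw [h₁]
  refine .head ⟨by simp, ℓ.tape_alive⟩ ?_
  rw [h₂]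
  refine .head ⟨by simp, halive⟩ (.done ?_)
  rw [step_right rfl, ← Ledger.tape_reset]
  exact ⟨_, update_self .., rfl⟩

theorem Flashed.run_entered (h : Flashed μ ℓ c) :
    decider.Run x (Opening ℓ) (Entered μ ℓ) c := by
  obtain ⟨v, -, rfl⟩ := h
  have hopen {s : State} {h : ℕ} {v : ℕ → Bool} (hs : s.control ≠ .halt) :
      Opening ℓ ⟨s, h, ℓ.tape, v⟩ := ⟨hs, ℓ.tape_alive⟩
  refine .head (hopen (by simp)) ?_
  rw [step_left (s' := ⟨.unflash, μ, true⟩) rfl, update_eq_self]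
  refine .head (hopen (by simp)) ?_
  rw [step_right (s' := ⟨.enter, μ, true⟩) rfl, update_eq_self]
  refine .done ⟨_, ⟨update_self .., ?_, by grind⟩, rfl⟩
  exact (update_of_ne one_ne_zero ..).trans (update_self ..)

theorem Entered.run_atBit (h : Entered μ ℓ c) :
    decider.Run x (Sound ℓ.tape (ℓ.during x μ (Iio 1)).tape μ) (AtBit x μ ℓ 0) c := by
  obtain ⟨v, hv, rfl⟩ := h
  rw [Ledger.during_Iio_one]
  have hu : Between ℓ.tape (ℓ.openAccount μ 0).tape ℓ.tape := between_left
  have hv₂ : Marked (update v 2 false) μ 2 ∅ := hv.update_add_one le_rfl (by grind)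
  have hv₃ : Marked (update (update v 2 false) 3 false) μ 3 ∅ :=
    hv₂.update_add_one (by omega) (by grind)
  have hv₄ : Marked (update (update (update v 2 false) 3 false) 4 false) μ 4 ∅ :=
    hv₃.update_add_one (by omega) (by grind)
  have hv₅ : Marked (update (update (update (update v 2 false) 3 false) 4 false) 5 true) μ 5 {5} :=
    hv₄.update_add_one (by omega) (by grind)
  refine moveRight (s' := ⟨.clear2, μ, true⟩) hu hv (by simp) rfl ?_
  refine markRight (s' := ⟨.clear3, μ, true⟩) hu hv (by simp) rfl ?_
  refine markRight (s' := ⟨.clear4, μ, true⟩) hu hv₂ (by simp) rfl ?_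
  refine markRight (s' := ⟨.plantBit, μ, true⟩) hu hv₃ (by simp) rfl ?_
  refine markLeft (s' := ⟨.back4, μ, true⟩) hu hv₄ (by simp) rfl ?_
  refine moveLeft (s' := ⟨.back3, μ, true⟩) hu hv₅ (by simp) rfl ?_
  refine moveLeft (s' := ⟨.readAlive, μ, true⟩) hu hv₅ (by simp) rfl ?_
  refine Program.Run.mono (run_readAlive (m := 0) hu between_right hv₅ (by omega)) fun d hd =>
    ⟨0, 0, true, .zero, ?_⟩
  rwa [Ledger.during_Iio_one]

end Setup

section Round

variable {x : R} {μ : Bool} {ℓ : Ledger} {c : Config State} {α : Ordinal.{0}}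

theorem run_phase (p : ℕ) (c : Config State) (h : Phase x μ ℓ p c) :
    decider.Run x (Sound (ℓ.during x μ (Iio p)).tape (ℓ.during x μ (Iio (p + 1))).tape μ)
      (Phase x μ ℓ (p + 1)) c := by
  cases p with
  | zero =>
    rw [Ledger.during_Iio_zero]
    exact Entered.run_atBit h
  | succ p => exact run_atBit p c h

theorem AtBit.head_eq {p : ℕ} (h : AtBit x μ ℓ p c) : c.head = p + 5 := by
  obtain ⟨m, a, r, -, v, -, rfl⟩ := h
  rfl

theorem not_phase_add_one (p : ℕ) (c : Config State) (h : Phase x μ ℓ p c) :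
    ¬ Phase x μ ℓ (p + 1) c := fun h' => by
  have hhead := AtBit.head_eq h'
  cases p with
  | zero =>
    obtain ⟨v, -, rfl⟩ := h
    exact absurd hhead (by simp)
  | succ p =>
    rw [AtBit.head_eq h] at hhead
    omega

theorem RoundStart.run_entered (h : RoundStart x μ ℓ c) :
    decider.Run x (Opening ℓ) (Entered μ ℓ) c :=
  Program.Run.trans h fun _ => Flashed.run_entered

theorem Sound.scratch_alive_eq_false {p n : ℕ}
    (h : Sound (ℓ.during x false (Iio p)).tape (ℓ.during x false (Iio (p + 1))).tape false c)
    (hn : ℓ.alive n = false) : c.scratch (2 * n + 2) = false := by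
  have hdead (T : Set ℕ) : (ℓ.during x false T).tape (2 * n + 2) = false := by
    simp only [Ledger.tape_alive, Ledger.during, Ledger.stillAlive, hn, Bool.false_or,
      Bool.false_and, ite_self]
  obtain h | h := h.scratch (2 * n + 2)
  · rw [h, hdead]
  · rw [h, hdead]

theorem RoundStart.ne_halt (h : RoundStart x μ ℓ c) (i : ℕ) :
    ((decider.step x)^[i] c).state.control ≠ .halt :=
  h.run_entered.forall_iterate (Q := fun c => c.state.control ≠ .halt) (fun _ hc => hc.1)
    (fun _ hc i => (Program.exists_phase run_phase not_phase_add_one (p := 0) hc i).elim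
      fun _ hq => hq.2.ne_halt) i

theorem RoundStart.scratch_alive_eq_false (h : RoundStart x false ℓ c) {n : ℕ}
    (hn : ℓ.alive n = false) (i : ℕ) : ((decider.step x)^[i] c).scratch (2 * n + 2) = false :=
  h.run_entered.forall_iterate (Q := fun c => c.scratch (2 * n + 2) = false)
    (fun _ hc => (hc.2 n).trans hn)
    (fun _ hc i => (Program.exists_phase run_phase not_phase_add_one (p := 0) hc i).elim
      fun _ hq => hq.2.scratch_alive_eq_false hn) i

theorem RoundStart.eventually_sound (h : RoundStart x μ ℓ c) (q : ℕ) :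
    ∀ᶠ i in atTop, ∃ p ≥ q, Sound (ℓ.during x μ (Iio p)).tape
      (ℓ.during x μ (Iio (p + 1))).tape μ ((decider.step x)^[i] c) :=
  h.run_entered.eventually_iterate
    (Q := fun c => ∃ p ≥ q, Sound (ℓ.during x μ (Iio p)).tape
      (ℓ.during x μ (Iio (p + 1))).tape μ c)
    fun _ hc => Program.eventually_phase run_phase not_phase_add_one (p := 0) hc q

theorem RoundStart.scratch_add_omega0 (h : RoundStart x μ ℓ (decider.config x α)) :
    (decider.config x (α + ω)).scratch = (ℓ.during x μ univ).tape := by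
  funext n
  obtain ⟨q, hq⟩ := eventually_atTop.1 (Ledger.eventually_during_tape (x := x) (first := μ)
    (ℓ := ℓ) n)
  refine Program.scratch_add_omega0 ((h.eventually_sound q).mono fun i hi => ?_)
  obtain ⟨p, hp, hs⟩ := hi
  obtain hn | hn := hs.scratch n
  · rw [hn, hq p hp]
  · rw [hn, hq (p + 1) (by omega)]

theorem RoundStart.output_zero_add_omega0 (h : RoundStart x μ ℓ (decider.config x α)) :
    (decider.config x (α + ω)).output 0 = μ :=
  Program.output_add_omega0 ((h.eventually_sound 0).mono fun _ ⟨_, _, hs⟩ => hs.zero)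

theorem RoundStart.output_one_add_omega0 (h : RoundStart x μ ℓ (decider.config x α)) :
    (decider.config x (α + ω)).output 1 = true :=
  Program.output_add_omega0 ((h.eventually_sound 0).mono fun _ ⟨_, _, hs⟩ => hs.one)

theorem RoundStart.exists_output_zero (h : RoundStart x μ ℓ c) :
    ∃ i, ((decider.step x)^[i] c).output 0 = true := by
  obtain ⟨i, ⟨v, hv, hi⟩, -⟩ := h
  exact ⟨i, hi ▸ hv⟩

end Round

end Decider

/-! ### The ledger after a round -/

namespace Ledger

variable {x : R} {first : Bool} {ℓ : Ledger} {alive : ℕ → Bool} {n : ℕ}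

theorem ofTape_tape : ofTape ℓ.tape = ℓ := by
  ext n
  · rfl
  · rfl
  · exact ℓ.tape_alive n
  · exact ℓ.tape_kept n

theorem keeps_true_pair (a b : ℕ) :
    keeps x true alive (Nat.pair a b) n = true ↔ rel x a b ∧ (n = a ∨ n = b) := by
  simp only [keeps, if_true, Nat.unpair_pair, Bool.and_eq_true, Bool.or_eq_true, beq_iff_eq, rel]

theorem keeps_false_pair (a b : ℕ) :
    keeps x false alive (Nat.pair a b) n = true ↔
      rel x a b ∧ n = b ∧ alive a ∨ ¬ rel x a b ∧ a ≠ b ∧ n = a ∧ alive b := by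
  by_cases h : rel x a b
  all_goals
    have h' := h
    rw [rel] at h'
    simp [keeps, h, h', and_assoc]

theorem exists_iff_exists_pair {q : ℕ → Prop} : (∃ p, q p) ↔ ∃ a b, q (Nat.pair a b) :=
  Nat.pairEquiv.surjective.exists.trans Prod.exists

theorem exists_keeps_true_iff : (∃ p, keeps x true alive p n) ↔ n ∈ field x := by
  rw [exists_iff_exists_pair]
  simp only [keeps_true_pair]
  constructor
  · rintro ⟨a, b, h, rfl | rfl⟩
    · exact ⟨b, .inl h⟩
    · exact ⟨a, .inr h⟩
  · rintro ⟨k, h | h⟩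
    · exact ⟨n, k, h, .inl rfl⟩
    · exact ⟨k, n, h, .inr rfl⟩

theorem exists_keeps_false_iff :
    (∃ p, keeps x false alive p n) ↔ ∃ k, alive k ∧ (rel x k n ∨ k ≠ n ∧ ¬ rel x n k) := by
  rw [exists_iff_exists_pair]
  simp only [keeps_false_pair]
  constructor
  · rintro ⟨a, b, ⟨h, rfl, ha⟩ | ⟨h, hab, rfl, hb⟩⟩
    · exact ⟨a, ha, .inl h⟩
    · exact ⟨b, hb, .inr ⟨hab.symm, h⟩⟩
  · rintro ⟨k, hk, h | ⟨hkn, h⟩⟩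
    · exact ⟨k, n, .inl ⟨h, rfl, hk⟩⟩
    · exact ⟨n, k, .inr ⟨h, hkn.symm, rfl, hk⟩⟩

theorem alive_during_univ : (ℓ.during x first univ).alive n = ℓ.stillAlive first n :=
  if_pos trivial

theorem kept_during_univ_eq_true_iff :
    (ℓ.during x first univ).kept n = true ↔ ∃ p, keeps x first (ℓ.stillAlive first) p n := by
  simp only [during, mem_univ, if_true, true_and, decide_eq_true_iff]

theorem changed_during_univ_eq_true_iff :
    (ℓ.during x first univ).changed = true ↔ ℓ.changed = true ∨ ∃ n, ℓ.dropped n := by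
  simp only [during, mem_univ, true_and, Bool.or_eq_true, decide_eq_true_iff]

theorem nonempty_during_univ_eq_true_iff :
    (ℓ.during x first univ).nonempty = true ↔
      ℓ.nonempty = true ∨ ∃ n, ℓ.stillAlive first n := by
  simp only [during, mem_univ, true_and, Bool.or_eq_true, decide_eq_true_iff]

end Ledger

/-! ### The stages between rounds -/

/-- The stage at which the first round and `α` further rounds have been completed. -/
noncomputable def roundEnd (α : Ordinal.{0}) : Ordinal.{0} := ω + ω * α

section RoundEnd

variable {α β γ : Ordinal.{0}} {f : Ordinal.{0} → Bool}

theorem isNormal_roundEnd : Order.IsNormal roundEnd :=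
  (isNormal_add_right ω).comp (isNormal_mul_right omega0_pos)

theorem roundEnd_zero : roundEnd 0 = ω := by
  rw [roundEnd, mul_zero, add_zero]

theorem roundEnd_add (α β : Ordinal.{0}) : roundEnd (α + β) = roundEnd α + ω * β := by
  rw [roundEnd, roundEnd, mul_add, add_assoc]

theorem roundEnd_add_one (α : Ordinal.{0}) : roundEnd (α + 1) = roundEnd α + ω := by
  rw [roundEnd_add, mul_one]

theorem isSuccLimit_roundEnd (α : Ordinal.{0}) : Order.IsSuccLimit (roundEnd α) := by
  induction α using Ordinal.limitRecOn with
  | zero => exact roundEnd_zero ▸ isSuccLimit_omega0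
  | add_one α => exact roundEnd_add_one α ▸ isSuccLimit_add _ isSuccLimit_omega0
  | limit α h => exact isNormal_roundEnd.map_isSuccLimit h

theorem roundEnd_add_natCast_lt (h : α < β) (i : ℕ) : roundEnd α + i < roundEnd β :=
  calc
    roundEnd α + i < roundEnd α + ω := add_lt_add_right (natCast_lt_omega0 i) _
    _ = roundEnd (α + 1) := (roundEnd_add_one α).symm
    _ ≤ roundEnd β := isNormal_roundEnd.monotone (Order.add_one_le_of_lt h)

theorem exists_eq_roundEnd_add_natCast (h : roundEnd β ≤ γ) (h' : γ < roundEnd α) :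
    ∃ δ, β ≤ δ ∧ δ < α ∧ ∃ i : ℕ, γ = roundEnd δ + i := by
  have hβα : β ≤ α := (isNormal_roundEnd.strictMono.lt_iff_lt.1 (h.trans_lt h')).le
  obtain ⟨ε, rfl⟩ := exists_add_of_le h
  obtain ⟨α, rfl⟩ := exists_add_of_le hβα
  rw [roundEnd_add, add_lt_add_iff_left] at h'
  obtain ⟨δ, hδ, r, hr, rfl⟩ := lt_mul_iff.1 h'
  obtain ⟨i, rfl⟩ := lt_omega0.1 hr
  exact ⟨β + δ, le_self_add, (add_lt_add_iff_left β).2 hδ, i, by rw [roundEnd_add, add_assoc]⟩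

theorem limSupBelow_roundEnd_eq_true (hα : Order.IsSuccLimit α)
    (h : ∀ β < α, ∃ i : ℕ, f (roundEnd β + i) = true) : limSupBelow (roundEnd α) f = true := by
  refine limSupBelow_eq_true_iff.2 fun γ hγ => ?_
  obtain ⟨β, hβ, hγβ⟩ := (isNormal_roundEnd.lt_iff_exists_lt hα).1 hγ
  obtain ⟨i, hi⟩ := h β hβ
  exact ⟨roundEnd β + i, hγβ.le.trans le_self_add, roundEnd_add_natCast_lt hβ i, hi⟩

theorem limSupBelow_roundEnd_eq_false (hβ : β < α)
    (h : ∀ δ, β ≤ δ → δ < α → ∀ i : ℕ, f (roundEnd δ + i) = false) :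
    limSupBelow (roundEnd α) f = false := by
  refine limSupBelow_eq_of_eventually_const (isNormal_roundEnd.strictMono hβ) fun γ hγ hγ' => ?_
  obtain ⟨δ, hβδ, hδ, i, rfl⟩ := exists_eq_roundEnd_add_natCast hγ hγ'
  exact h δ hβδ hδ i

end RoundEnd

namespace Decider

/-- The ledger on the scratch tape after the first round and `α` further rounds. -/
noncomputable def ledgerAt (x : R) (α : Ordinal.{0}) : Ledger :=
  .ofTape (decider.config x (roundEnd α)).scratch

/-- The output tape after the first round and `α` further rounds. -/
noncomputable def outputAt (x : R) (α : Ordinal.{0}) : ℕ → Bool :=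
  (decider.config x (roundEnd α)).output

section

variable {x : R} {α : Ordinal.{0}} {ℓ : Ledger}

theorem tape_ledgerAt : (ledgerAt x α).tape = (decider.config x (roundEnd α)).scratch :=
  Ledger.tape_ofTape _

variable (x α) in
theorem config_roundEnd :
    decider.config x (roundEnd α) =
      ⟨⟨.limit, false, true⟩, 0, (ledgerAt x α).tape, outputAt x α⟩ := by
  rw [tape_ledgerAt, outputAt, Program.config_of_isSuccLimit _ _ (isSuccLimit_roundEnd α)]
  rfl

theorem scratch_roundEnd (n : ℕ) :
    (decider.config x (roundEnd α)).scratch n =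
      limSupBelow (roundEnd α) fun γ => (decider.config x γ).scratch n := by
  conv_lhs => rw [Program.config_of_isSuccLimit _ _ (isSuccLimit_roundEnd α)]

theorem outputAt_eq_limSupBelow (n : ℕ) :
    outputAt x α n = limSupBelow (roundEnd α) fun γ => (decider.config x γ).output n := by
  rw [outputAt, Program.config_of_isSuccLimit _ _ (isSuccLimit_roundEnd α)]

variable (x) in
theorem roundStart_zero :
    RoundStart x true ((Ledger.ofTape zeroR).reset true) (decider.config x 0) := by
  rw [Program.config_zero]
  exact roundStart_start

theorem ledgerAt_zero :
    ledgerAt x 0 = ((Ledger.ofTape zeroR).reset true).during x true univ := by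
  rw [ledgerAt, roundEnd_zero, ← zero_add ω, (roundStart_zero x).scratch_add_omega0,
    Ledger.ofTape_tape]

theorem ledgerAt_add_one (h : RoundStart x false ℓ (decider.config x (roundEnd α))) :
    ledgerAt x (α + 1) = ℓ.during x false univ := by
  rw [ledgerAt, roundEnd_add_one, h.scratch_add_omega0, Ledger.ofTape_tape]

end

/-! ### The rounds compute the survivors -/

/-- The last round that ends at `roundEnd α` finds that the round before it has not removed any
number. -/
def StableAt (x : R) (α : Ordinal.{0}) : Prop :=
  ∃ β, α = β + 1 + 1 ∧ survivors x (β + 1) = survivors x β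

/-- The meaning of the tapes at stage `roundEnd α`. Cell `0` of the output tape distinguishes limits
of rounds from the ends of single rounds. -/
structure RoundInvariant (x : R) (α : Ordinal.{0}) : Prop where
  alive (n : ℕ) : (ledgerAt x α).alive n = true ↔ ∀ β < α, n ∈ survivors x β
  survives (n : ℕ) : (ledgerAt x α).stillAlive false n = true ↔ n ∈ survivors x α
  changed : (ledgerAt x α).changed = true ↔ ¬ StableAt x α
  flag : outputAt x α 0 = true ↔ ∀ β, α ≠ β + 1
  mark : outputAt x α 1 = true

section RoundInvariant

variable {x : R} {α : Ordinal.{0}} {n : ℕ}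

theorem not_stableAt_of_ne_add_one (h : ∀ β, α ≠ β + 1) : ¬ StableAt x α := fun ⟨_, hβ, _⟩ =>
  h _ hβ

theorem stableAt_add_one_add_one :
    StableAt x (α + 1 + 1) ↔ survivors x (α + 1) = survivors x α := by
  simp only [StableAt, Order.add_one_inj, exists_eq_left']

theorem mem_survivors_add_one_iff :
    n ∈ survivors x (α + 1) ↔
      n ∈ survivors x α ∧ ∃ k ∈ survivors x α, rel x k n ∨ k ≠ n ∧ ¬ rel x n k := by
  rw [mem_survivors_add_one]
  refine ⟨fun h => ⟨survivors_antitone le_self_add (mem_survivors_add_one.2 h), h.2⟩, fun h => ?_⟩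
  exact ⟨survivors_zero.subset (survivors_antitone zero_le h.1), h.2⟩

theorem forall_lt_add_one_mem_survivors :
    (∀ β < α + 1, n ∈ survivors x β) ↔ n ∈ survivors x α :=
  ⟨fun h => h α (lt_add_one α), fun h _ hβ => survivors_antitone (Order.lt_add_one_iff.1 hβ) h⟩

namespace RoundInvariant

variable (x) in
theorem zero : RoundInvariant x 0 := by
  have hne (β : Ordinal.{0}) : 0 ≠ β + 1 := (Order.lt_add_one_iff.2 zero_le).ne
  have hstart := roundStart_zero x
  constructor
  case alive =>
    intro n
    rw [ledgerAt_zero, Ledger.alive_during_univ]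
    exact iff_of_true rfl fun β hβ => absurd hβ (not_lt_zero)
  case survives =>
    intro n
    rw [survivors_zero, ← Ledger.exists_keeps_true_iff, ← Ledger.kept_during_univ_eq_true_iff,
      ← ledgerAt_zero, Ledger.stillAlive, ledgerAt_zero, Ledger.alive_during_univ]
    rfl
  case changed =>
    rw [ledgerAt_zero, Ledger.changed_during_univ_eq_true_iff]
    exact iff_of_true (.inl rfl) (not_stableAt_of_ne_add_one hne)
  case flag =>
    rw [outputAt, roundEnd_zero, ← zero_add ω, hstart.output_zero_add_omega0]
    exact iff_of_true rfl hne
  case mark => rw [outputAt, roundEnd_zero, ← zero_add ω, hstart.output_one_add_omega0]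

theorem roundStart (h : RoundInvariant x α) (hα : ¬ StableAt x α) :
    RoundStart x false ((ledgerAt x α).reset (outputAt x α 0))
      (decider.config x (roundEnd α)) := by
  rw [config_roundEnd]
  exact roundStart_limit (h.changed.2 hα) h.mark

theorem dropped_eq_true_iff (h : RoundInvariant x α) :
    (ledgerAt x α).dropped n = true ↔ (∀ β < α, n ∈ survivors x β) ∧ n ∉ survivors x α := by
  rw [← h.alive, ← h.survives]
  simp only [Ledger.dropped, Ledger.stillAlive, Bool.false_or, Bool.and_eq_true,
    Bool.not_eq_true', not_and, Bool.not_eq_true]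
  exact and_congr_right fun halive => ⟨fun hk _ => hk, fun hk => hk halive⟩

theorem flag_or_dropped_iff (h : RoundInvariant x α) :
    (outputAt x α 0 = true ∨ ∃ n, (ledgerAt x α).dropped n) ↔ ¬ StableAt x (α + 1) := by
  simp only [h.flag, h.dropped_eq_true_iff]
  by_cases hα : ∃ β, α = β + 1
  · obtain ⟨β, rfl⟩ := hα
    have hflag : ¬ ∀ γ, β + 1 ≠ γ + 1 := fun hγ => hγ β rfl
    simp only [hflag, false_or, forall_lt_add_one_mem_survivors, stableAt_add_one_add_one]
    rw [← not_subset]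
    exact not_congr ⟨(survivors_antitone le_self_add).antisymm, fun e => e.ge⟩
  · refine iff_of_true (.inl (not_exists.1 hα)) ?_
    rintro ⟨β, hβ, -⟩
    exact hα ⟨β, Order.add_one_inj.1 hβ⟩

theorem add_one (h : RoundInvariant x α) (hα : ¬ StableAt x α) : RoundInvariant x (α + 1) := by
  have hstart := h.roundStart hα
  have hledger := ledgerAt_add_one hstart
  have halive (n : ℕ) : (ledgerAt x (α + 1)).alive n = true ↔ n ∈ survivors x α := by
    rw [hledger, Ledger.alive_during_univ, ← h.survives]
    rfl
  have hkept (n : ℕ) : (ledgerAt x (α + 1)).kept n = true ↔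
      ∃ k ∈ survivors x α, rel x k n ∨ k ≠ n ∧ ¬ rel x n k := by
    rw [hledger, Ledger.kept_during_univ_eq_true_iff, Ledger.exists_keeps_false_iff]
    simp only [← h.survives]
    rfl
  constructor
  case alive => exact fun n => (halive n).trans forall_lt_add_one_mem_survivors.symm
  case survives =>
    intro n
    rw [Ledger.stillAlive, Bool.false_or, Bool.and_eq_true, halive, hkept,
      mem_survivors_add_one_iff]
  case changed =>
    rw [hledger, Ledger.changed_during_univ_eq_true_iff]
    exact h.flag_or_dropped_iff
  case flag =>
    rw [outputAt, roundEnd_add_one, hstart.output_zero_add_omega0]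
    exact iff_of_false Bool.false_ne_true fun hne => hne α rfl
  case mark => rw [outputAt, roundEnd_add_one, hstart.output_one_add_omega0]

section Limit

variable (hα : Order.IsSuccLimit α)
include hα

theorem tape_ledgerAt_eq_true_of_forall (h : ∀ β < α, (ledgerAt x β).tape n = true) :
    (ledgerAt x α).tape n = true := by
  rw [tape_ledgerAt, scratch_roundEnd]
  refine limSupBelow_roundEnd_eq_true hα fun β hβ => ⟨0, ?_⟩
  rw [Nat.cast_zero, add_zero, ← tape_ledgerAt]
  exact h β hβ

variable (ih : ∀ β < α, RoundInvariant x β ∧ ¬ StableAt x β)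
include ih

theorem alive_of_isSuccLimit :
    (ledgerAt x α).alive n = true ↔ ∀ β < α, n ∈ survivors x β := by
  rw [← Ledger.tape_alive]
  constructor
  · intro h β hβ
    by_contra hn
    refine Bool.false_ne_true (Eq.trans (Eq.symm ?_) h)
    rw [tape_ledgerAt, scratch_roundEnd]
    refine limSupBelow_roundEnd_eq_false (hα.add_one_lt hβ) fun δ hβδ hδ i => ?_
    have hdead : ¬ (ledgerAt x δ).alive n = true := fun hn' =>
      hn (((ih δ hδ).1.alive n).1 hn' β (Order.add_one_le_iff.1 hβδ))
    rw [Program.config_add_nat]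
    exact ((ih δ hδ).1.roundStart (ih δ hδ).2).scratch_alive_eq_false
      (Bool.eq_false_of_not_eq_true hdead) i
  · intro h
    refine tape_ledgerAt_eq_true_of_forall hα fun β hβ => ?_
    rw [Ledger.tape_alive, (ih β hβ).1.alive]
    exact fun γ hγ => h γ (hγ.trans hβ)

theorem limit : RoundInvariant x α := by
  have hne (β : Ordinal.{0}) : α ≠ β + 1 := fun e =>
    (hα.add_one_lt (e ▸ lt_add_one β)).ne' e
  constructor
  case alive => exact fun n => alive_of_isSuccLimit hα ih
  case survives =>
    intro n
    rw [Ledger.stillAlive, Bool.false_or, Bool.and_eq_true, alive_of_isSuccLimit hα ih,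
      ← mem_survivors_iff_of_isSuccLimit hα]
    refine and_iff_left_of_imp fun hn => ?_
    rw [← Ledger.tape_kept]
    refine tape_ledgerAt_eq_true_of_forall hα fun β hβ => ?_
    have hnβ := ((ih β hβ).1.survives n).2 (survivors_antitone hβ.le hn)
    rw [Ledger.stillAlive, Bool.false_or, Bool.and_eq_true] at hnβ
    rw [Ledger.tape_kept, hnβ.2]
  case changed =>
    refine iff_of_true ?_ (not_stableAt_of_ne_add_one hne)
    exact tape_ledgerAt_eq_true_of_forall hα (n := 0) fun β hβ => (ih β hβ).1.changed.2 (ih β hβ).2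
  case flag =>
    refine iff_of_true ?_ hne
    rw [outputAt_eq_limSupBelow]
    refine limSupBelow_roundEnd_eq_true hα fun β hβ => ?_
    simp only [Program.config_add_nat]
    exact ((ih β hβ).1.roundStart (ih β hβ).2).exists_output_zero
  case mark =>
    rw [outputAt_eq_limSupBelow]
    refine limSupBelow_roundEnd_eq_true hα fun β hβ => ⟨0, ?_⟩
    rw [Nat.cast_zero, add_zero]
    exact (ih β hβ).1.mark

end Limit

end RoundInvariant

theorem roundInvariant_of_forall_lt (h : ∀ β < α, ¬ StableAt x β) : RoundInvariant x α := by
  induction α using Ordinal.limitRecOn with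
  | zero => exact .zero x
  | add_one α ih =>
    exact (ih fun β hβ => h β (hβ.trans (lt_add_one α))).add_one (h α (lt_add_one α))
  | limit α hα ih =>
    exact .limit hα fun β hβ => ⟨ih β hβ fun γ hγ => h γ (hγ.trans hβ), h β hβ⟩

theorem ne_halt_of_lt_roundEnd (h : ∀ β < α, ¬ StableAt x β) {γ : Ordinal.{0}}
    (hγ : γ < roundEnd α) : (decider.config x γ).state.control ≠ .halt := by
  obtain hγ' | hγ' := lt_or_ge γ (roundEnd 0)
  · rw [roundEnd_zero] at hγ'
    obtain ⟨i, rfl⟩ := lt_omega0.1 hγ'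
    rw [← zero_add (i : Ordinal), Program.config_add_nat]
    exact (roundStart_zero x).ne_halt i
  · obtain ⟨β, -, hβ, i, rfl⟩ := exists_eq_roundEnd_add_natCast hγ' hγ
    rw [Program.config_add_nat]
    have hinv := roundInvariant_of_forall_lt fun δ hδ => h δ (hδ.trans hβ)
    exact (hinv.roundStart (h β hβ)).ne_halt i

theorem nonempty_ledgerAt_add_one (h : RoundInvariant x α) (hα : ¬ StableAt x α) :
    (ledgerAt x (α + 1)).nonempty = true ↔ (survivors x α).Nonempty := by
  rw [ledgerAt_add_one (h.roundStart hα), Ledger.nonempty_during_univ_eq_true_iff]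
  exact (or_iff_right Bool.false_ne_true).trans (exists_congr h.survives)

end RoundInvariant

/-! ### The answer -/

/-- The configurations in which the program begins to erase the output tape, when the scratch tape
is `u`. -/
def Erasing (u : ℕ → Bool) (c : Config State) : Prop :=
  ∃ v, c = ⟨⟨.erase, false, true⟩, 0, u, v⟩

section Answer

variable {x : R} {ℓ : Ledger} {u v : ℕ → Bool} {c : Config State} {α : Ordinal.{0}}

theorem run_erasing (hchanged : ℓ.changed = false) (hv : v 1 = true) :
    decider.Run x (fun c => c.state.control ≠ .halt) (Erasing ℓ.tape)
      ⟨⟨.limit, false, true⟩, 0, ℓ.tape, v⟩ := by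
  have hchanged' : ℓ.tape 0 = false := hchanged
  refine .head (by simp) ?_
  rw [step_right (s' := ⟨.readMark false (v 0), false, true⟩) (by rw [← hchanged']; rfl)]
  rw [update_eq_self, update_eq_self]
  refine .head (by simp) (.done ?_)
  rw [step_left (s' := ⟨.erase, false, true⟩) (by rw [hv]; rfl), update_eq_self]
  exact ⟨_, rfl⟩

theorem iterate_erase (i : ℕ) :
    (decider.step x)^[i] ⟨⟨.erase, false, true⟩, 0, u, v⟩ =
      ⟨⟨.erase, false, true⟩, i, u, fun n => if n < i then false else v n⟩ := by
  induction i with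
  | zero => rfl
  | succ i ih =>
    rw [iterate_succ_apply', ih, step_right rfl, update_eq_self, Config.mk.injEq]
    exact ⟨rfl, rfl, rfl, by grind⟩

theorem Erasing.ne_halt (h : Erasing u c) (i : ℕ) :
    ((decider.step x)^[i] c).state.control ≠ .halt := by
  obtain ⟨v, rfl⟩ := h
  rw [iterate_erase]
  simp

theorem Erasing.scratch_iterate (h : Erasing u c) (i : ℕ) :
    ((decider.step x)^[i] c).scratch = u := by
  obtain ⟨v, rfl⟩ := h
  rw [iterate_erase]

theorem Erasing.eventually_output_eq_false (h : Erasing u c) (n : ℕ) :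
    ∀ᶠ i in atTop, ((decider.step x)^[i] c).output n = false := by
  obtain ⟨v, rfl⟩ := h
  filter_upwards [eventually_gt_atTop n] with i hi
  rw [iterate_erase]
  exact if_pos hi

theorem config_add_omega0_of_run_erasing
    (h : decider.Run x (fun c => c.state.control ≠ .halt) (Erasing u) (decider.config x α)) :
    decider.config x (α + ω) = ⟨⟨.limit, false, true⟩, 0, u, zeroR⟩ := by
  have hscratch : (decider.config x (α + ω)).scratch = u := funext fun n =>
    Program.scratch_add_omega0 <| h.eventually_iterate (Q := fun c => c.scratch n = u n)
      fun c hc => .of_forall fun i => congrFun (hc.scratch_iterate i) n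
  have houtput : (decider.config x (α + ω)).output = zeroR := funext fun n =>
    Program.output_add_omega0 <| h.eventually_iterate (Q := fun c => c.output n = false)
      fun c hc => hc.eventually_output_eq_false n
  rw [Program.config_of_isSuccLimit _ _ (isSuccLimit_add _ isSuccLimit_omega0)]
    at hscratch houtput ⊢
  rw [Config.mk.injEq]
  exact ⟨rfl, rfl, hscratch, houtput⟩

theorem run_answer :
    decider.Run x (fun c => c.state ≠ decider.halt)
      (fun c => c.state = decider.halt ∧ c.output = update zeroR 0 (!u 1))
      ⟨⟨.limit, false, true⟩, 0, u, zeroR⟩ := by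
  have hzero (n : ℕ) : update zeroR n false = zeroR := update_eq_self n zeroR
  refine .head (by simp [decider]) ?_
  rw [step_right (s' := ⟨.readMark (u 0) false, false, true⟩) rfl, update_eq_self,
    update_eq_self]
  refine .head (by simp [decider]) ?_
  rw [step_left (s' := ⟨.answer (u 1), false, true⟩) rfl, update_eq_self, hzero]
  refine .head (by simp [decider]) (.done ?_)
  rw [step_right (s' := ⟨.halt, false, true⟩) rfl]
  exact ⟨rfl, rfl⟩

theorem exists_least_stableAt (x : R) : ∃ α, StableAt x (α + 1 + 1) ∧
    ∀ β < α + 1 + 1, ¬ StableAt x β := by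
  obtain ⟨α, hα⟩ := exists_survivors_add_one_eq x
  obtain ⟨β, hβ, hmin⟩ := WellFounded.has_min Ordinal.lt_wf {β | StableAt x β}
    ⟨_, stableAt_add_one_add_one.2 hα⟩
  obtain ⟨γ, rfl, -⟩ := id hβ
  exact ⟨γ, hβ, fun δ hδ hδ' => hmin δ hδ' hδ⟩

theorem outputs_decider (x : R) :
    decider.toMachine.outputs x (update zeroR 0 (decide (x ∈ WO))) := by
  obtain ⟨α, hα, hlt⟩ := exists_least_stableAt x
  have hinv (β : Ordinal.{0}) (hβ : β ≤ α + 1 + 1) : RoundInvariant x β :=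
    roundInvariant_of_forall_lt fun γ hγ => hlt γ (hγ.trans_le hβ)
  have hpred : α + 1 < α + 1 + 1 := lt_add_one _
  set ℓ := ledgerAt x (α + 1 + 1)
  have hempty : (!ℓ.nonempty) = decide (x ∈ WO) := by
    rw [Bool.eq_iff_iff, Bool.not_eq_true', ← Bool.not_eq_true, decide_eq_true_iff, mem_WO_iff,
      nonempty_ledgerAt_add_one (hinv _ hpred.le) (hlt _ hpred),
      stableAt_add_one_add_one.1 hα, gfp_notLeast_eq_survivors (stableAt_add_one_add_one.1 hα),
      not_nonempty_iff_eq_empty]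
  have hrun : decider.Run x (fun c => c.state.control ≠ .halt) (Erasing ℓ.tape)
      (decider.config x (roundEnd (α + 1 + 1))) := by
    rw [config_roundEnd]
    refine run_erasing (Bool.eq_false_of_not_eq_true fun h => ?_) (hinv _ le_rfl).mark
    exact (hinv _ le_rfl).changed.1 h hα
  rw [← hempty]
  refine Program.outputs_of_run (α := roundEnd (α + 1 + 1) + ω) ?_ fun γ hγ e => ?_
  · rw [config_add_omega0_of_run_erasing hrun]
    exact run_answer
  have hhalt : (decider.config x γ).state.control = .halt := congrArg State.control e
  obtain hγ' | hγ' := lt_or_ge γ (roundEnd (α + 1 + 1))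
  · exact ne_halt_of_lt_roundEnd hlt hγ' hhalt
  · obtain ⟨i, rfl⟩ := Program.exists_add_nat_of_lt_add_omega0 hγ' hγ
    rw [Program.config_add_nat] at hhalt
    exact hrun.forall_iterate (Q := fun c => c.state.control ≠ .halt) (fun _ hc => hc)
      (fun _ hc => hc.ne_halt) i hhalt

end Answer

end Decider

theorem update_zeroR_true : update zeroR 0 true = oneR := by
  funext n
  rw [update_apply, oneR, zeroR, Bool.if_true_left, Bool.or_false]

end ITTM

/-- **Count-Through Theorem.** The set `WO` of reals coding well-orders is
infinite time decidable. -/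
theorem WO_decidable : ITTM.ITTMDecidable ITTM.WO := by
  refine ⟨ITTM.decider.toMachine, fun x => ⟨fun hx => ?_, fun hx => ?_⟩⟩
  · rw [← ITTM.update_zeroR_true, ← decide_eq_true hx]
    exact ITTM.Decider.outputs_decider x
  · rw [← Function.update_eq_self 0 ITTM.zeroR, ITTM.zeroR, ← decide_eq_false hx]
    exact ITTM.Decider.outputs_decider x
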